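/- arXiv:2303.10467 — 2 statements merged into one kernel-verified Lean document; each statement's English description precedes it below -/
import Mathlib

section
/- Suppose λ_0, …, λ_{ns−1} are pairwise distinct and satisfy the local constraints. Fix a ∈ {0,…,n/(s+1)−1}, b ∈ {0,…,s−1}, and a helper set H ⊆ {0,…,n−1} \ {a(s+1)+b} with |H| = d. If two codewords C = (C_0,…,C_{n−1}) and C′ = (C′_0,…,C′_{n−1}) of the array code satisfy C_j(i) = C′_j(i) for every j ∈ H and every i ∈ {0,…,ℓ−1} whose a-th base-s digit i_a equals b, then C_{a(s+1)+b} = C′_{a(s+1)+b}. In other words, each of the first s nodes of group a can be repaired from any d helper nodes by accessing only the ℓ/s symbols with i_a = b from each helper, achieving the optimal repair bandwidth dℓ/(d−k+1). -/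
open Matrix

/-- The `u`-th digit of `i` in base `s`. -/
def digit (s i u : ℕ) : ℕ := i / s ^ u % s

open scoped Classical in
/-- The `z`-th entry of the `(i,j)` block (a length-`t` column vector, `0 ≤ z < t`) of the
block matrix `A_{a,b}^{(t)}`; the group size is `g` (`g = s` for the first construction and
`g = s + 1` for the second), so the relevant `λ`-index is `a·s·g + b·s + j_a`. -/
noncomputable def Aent {F : Type*} [Field F] (lam : ℕ → F) (s g a b i j z : ℕ) : F :=
  if i = j then lam (a * s * g + b * s + digit s j a) ^ z
  else if digit s i a = b ∧ digit s j a ≠ b ∧ (∀ u, u ≠ a → digit s i u = digit s j u) then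
    -(lam (a * s * g + b * s + digit s j a) ^ z)
  else 0

/-- `A_{a,b}^{(t)}` as an `ℓt × ℓ` matrix; row `ρ` encodes block row `ρ / t` and
inner row `ρ % t`. -/
noncomputable def Amat {F : Type*} [Field F] (lam : ℕ → F) (s g ℓ a b t : ℕ) :
    Matrix (Fin (ℓ * t)) (Fin ℓ) F :=
  Matrix.of fun ρ j => Aent lam s g a b ((ρ : ℕ) / t) (j : ℕ) ((ρ : ℕ) % t)

/-- The `m`-th smallest element of the finite set `B ⊆ ℕ` (junk value `0` if `m ≥ |B|`). -/
def enum (B : Finset ℕ) (m : ℕ) : ℕ := (B.sort (· ≤ ·)).getD m 0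

/-- `A_{a,B}^{(t)} = [A_{a,b₁}^{(t)} | ⋯ | A_{a,b_v}^{(t)}]` as an `ℓt × ℓ|B|` matrix:
row `ρ` encodes block row `ρ / t` and inner row `ρ % t`; column `κ` selects the
`κ / ℓ`-th member of `B` and inner column `κ % ℓ`. -/
noncomputable def AmatB {F : Type*} [Field F] (lam : ℕ → F) (s g ℓ a t : ℕ) (B : Finset ℕ) :
    Matrix (Fin (ℓ * t)) (Fin (ℓ * B.card)) F :=
  Matrix.of fun ρ κ =>
    Aent lam s g a (enum B ((κ : ℕ) / ℓ)) ((ρ : ℕ) / t) ((κ : ℕ) % ℓ) ((ρ : ℕ) % t)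

/-- The local (in-group) constraints: every square matrix `A_{a,B}` (for a group index
`a < groups` and a nonempty `B ⊆ {0, …, g-1}`) is invertible. -/
def LocalConstraints {F : Type*} [Field F] (lam : ℕ → F) (s g ℓ groups : ℕ) : Prop :=
  ∀ a < groups, ∀ B ⊆ Finset.range g, B.Nonempty → (AmatB lam s g ℓ a B.card B).det ≠ 0

/-- Membership in the array code: `(C_0, …, C_{n−1})` satisfies the parity check equations
`Σ_{a,b} A_{a,b}^{(r)} · C_{a·g+b} = 0` (node `m = a·g + b`). -/
def InCode {F : Type*} [Field F] (lam : ℕ → F) (s g ℓ r n : ℕ) (C : ℕ → ℕ → F) : Prop :=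
  ∀ ρ < ℓ * r, ∑ m ∈ Finset.range n, ∑ j ∈ Finset.range ℓ,
    Aent lam s g (m / g) (m % g) (ρ / r) j (ρ % r) * C m j = 0

section AbstractPart

variable {F V ι γ : Type*} [Field F] [AddCommGroup V] [Module F V]

/-- The syndrome sequence. -/
def syn (N D : ι → Module.End F V) (S : Finset ι) (x : ι → V) (z : ℕ) : V :=
  ∑ i ∈ S, N i ((D i ^ z) (x i))

lemma syn_shift (N D : ι → Module.End F V) (S : Finset ι) (x : ι → V) (z w : ℕ) :
    syn N D S (fun i => (D i ^ z) (x i)) w = syn N D S x (z + w) := by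
  unfold syn
  refine Finset.sum_congr rfl fun i _ => ?_
  rw [add_comm, pow_add]; rfl

lemma syn_comm (N D : ι → Module.End F V) (S : Finset ι) (x : ι → V) (z : ℕ)
    (T : Module.End F V) (hN : ∀ i ∈ S, Commute T (N i)) (hD : ∀ i ∈ S, Commute T (D i)) :
    syn N D S (fun i => T (x i)) z = T (syn N D S x z) := by
  unfold syn
  rw [map_sum]
  refine Finset.sum_congr rfl fun i hi => ?_
  have h := ((hN i hi).mul_right ((hD i hi).pow_right z)).eq
  exact (congrArg (fun f : Module.End F V => f (x i)) h).symm

lemma syn_congr (N D : ι → Module.End F V) (S : Finset ι) (x y : ι → V) (z : ℕ)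
    (h : ∀ i ∈ S, x i = y i) : syn N D S x z = syn N D S y z := by
  unfold syn
  exact Finset.sum_congr rfl fun i hi => by rw [h i hi]

lemma syn_sub (N D : ι → Module.End F V) (S : Finset ι) (x y : ι → V) (z : ℕ) :
    syn N D S (fun i => x i - y i) z = syn N D S x z - syn N D S y z := by
  simp [syn, Finset.sum_sub_distrib]

lemma syn_sum {κ : Type*} (N D : ι → Module.End F V) (S : Finset ι) (R : Finset κ)
    (x : κ → ι → V) (z : ℕ) :
    syn N D S (fun i => ∑ w ∈ R, x w i) z = ∑ w ∈ R, syn N D S (x w) z := by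
  simp only [syn, map_sum]
  rw [Finset.sum_comm]

lemma local_data [FiniteDimensional F V] (N D : ι → Module.End F V) (S : Finset ι)
    (hloc : ∀ x : ι → V, (∀ z < S.card, syn N D S x z = 0) → ∀ i ∈ S, x i = 0) :
    (∀ y : ℕ → V, ∃ x : ι → V, ∀ z < S.card, syn N D S x z = y z) ∧
    ∃ Φ : ℕ → Module.End F V, ∀ x : ι → V,
      syn N D S x S.card = ∑ w ∈ Finset.range S.card, Φ w (syn N D S x w) := by
  classical
  let ext : (S → V) →ₗ[F] (ι → V) :=
    { toFun := fun f i => if h : i ∈ S then f ⟨i, h⟩ else 0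
      map_add' := by intro f g; ext i; by_cases h : i ∈ S <;> simp [h]
      map_smul' := by intro c f; ext i; by_cases h : i ∈ S <;> simp [h] }
  let synL : ℕ → (ι → V) →ₗ[F] V := fun z =>
    { toFun := fun x => syn N D S x z
      map_add' := by intro f g; simp [syn, Finset.sum_add_distrib]
      map_smul' := by intro c f; simp [syn, Finset.smul_sum] }
  let L : (S → V) →ₗ[F] (Fin S.card → V) := LinearMap.pi fun z => (synL z) ∘ₗ ext
  have hinj : Function.Injective L := by
    rw [← LinearMap.ker_eq_bot, LinearMap.ker_eq_bot']
    intro f hf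
    have := hloc (ext f) (fun z hz => congrFun hf ⟨z, hz⟩)
    ext ⟨i, hi⟩
    have h2 := this i hi
    simpa [ext, hi] using h2
  have hfr : Module.finrank F (S → V) = Module.finrank F (Fin S.card → V) := by
    simp [Module.finrank_pi_fintype]
  let E := LinearMap.linearEquivOfInjective L hinj hfr
  have hE : ∀ f, E f = L f := fun f => LinearMap.linearEquivOfInjective_apply hinj hfr f
  refine ⟨fun y => ⟨ext (E.symm fun z => y z), fun z hz => ?_⟩, ?_⟩
  · have : L (E.symm fun z => y z) = fun z : Fin S.card => y z := by
      rw [← hE]; simp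
    exact congrFun this ⟨z, hz⟩
  · refine ⟨fun w => if hw : w < S.card then
      (synL S.card) ∘ₗ ext ∘ₗ E.symm.toLinearMap ∘ₗ LinearMap.single F (fun _ => V) ⟨w, hw⟩
      else 0, fun x => ?_⟩
    have hx : ∀ z, syn N D S x z = synL z (ext fun i => x i) := by
      intro z
      refine syn_congr _ _ _ _ _ _ fun i hi => ?_
      simp [ext, hi]
    have h1 : (fun i : S => x i) = E.symm (L fun i : S => x i) := by rw [← hE]; simp
    have h2 : L (fun i : S => x i) = ∑ w : Fin S.card, Pi.single w (syn N D S x w) := by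
      ext w
      rw [Finset.sum_apply, Finset.sum_eq_single w]
      · simp only [Pi.single_eq_same]; rw [hx]; rfl
      · intro b _ hb; simp [hb.symm]
      · simp
    rw [hx, h1, h2, map_sum, map_sum, map_sum, Finset.sum_range]
    refine Finset.sum_congr rfl fun w _ => ?_
    simp

theorem global_inj [FiniteDimensional F V] (N D : ι → Module.End F V) (π : ι → γ) :
    ∀ (c : ℕ) (S : Finset ι), S.card = c →
    (∀ i ∈ S, ∀ j ∈ S, π i ≠ π j → Commute (N i) (N j) ∧ Commute (N i) (D j) ∧
      Commute (D i) (D j) ∧ ∀ y, D i y = D j y → y = 0) →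
    (∀ T ⊆ S, T.Nonempty → (∃ g, ∀ i ∈ T, π i = g) → ∀ x : ι → V,
      (∀ z < T.card, syn N D T x z = 0) → ∀ i ∈ T, x i = 0) →
    ∀ x : ι → V, (∀ z < S.card, syn N D S x z = 0) → ∀ i ∈ S, x i = 0 := by
  classical
  intro c
  induction c using Nat.strong_induction_on with
  | _ c ih =>
  intro S hc hcomm hloc x hx i0 hi0
  set S1 := S.filter (fun i => π i = π i0) with hS1
  set S2 := S.filter (fun i => ¬ π i = π i0) with hS2
  have hcard : S1.card + S2.card = S.card := Finset.card_filter_add_card_filter_not _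
  have hne : S1.Nonempty := ⟨i0, by simp [hS1, hi0]⟩
  have hsum : ∀ y z, syn N D S y z = syn N D S1 y z + syn N D S2 y z := by
    intro y z
    exact (Finset.sum_filter_add_sum_filter_not S _ _).symm
  have hl1 := hloc S1 (Finset.filter_subset _ _) hne ⟨π i0, fun i hi => (Finset.mem_filter.1 hi).2⟩
  obtain ⟨hsurj, Φ, hΦ⟩ := local_data N D S1 hl1
  have hpos : 0 < S1.card := hne.card_pos
  -- commutation of Φ
  have hΦc : ∀ T : Module.End F V, (∀ i ∈ S1, Commute T (N i)) → (∀ i ∈ S1, Commute T (D i)) →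
      ∀ w < S1.card, ∀ y, Φ w (T y) = T (Φ w y) := by
    intro T hN hD w hw y
    obtain ⟨u, hu⟩ := hsurj (fun z => if z = w then y else 0)
    have e1 : syn N D S1 u S1.card = Φ w y := by
      rw [hΦ, Finset.sum_eq_single w]
      · rw [hu w hw]; simp
      · intro z hz hzw; rw [hu z (Finset.mem_range.1 hz)]; simp [hzw]
      · simp [hw]
    have e2 : syn N D S1 (fun i => T (u i)) S1.card = Φ w (T y) := by
      rw [hΦ, Finset.sum_eq_single w]
      · rw [syn_comm _ _ _ _ _ T hN hD, hu w hw]; simp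
      · intro z hz hzw
        rw [syn_comm _ _ _ _ _ T hN hD, hu z (Finset.mem_range.1 hz)]; simp [hzw]
      · simp [hw]
    rw [← e2, ← e1, syn_comm _ _ _ _ _ T hN hD]
  have m1 : ∀ i ∈ S1, i ∈ S ∧ π i = π i0 := fun i hi => Finset.mem_filter.1 hi
  have m2 : ∀ i ∈ S2, i ∈ S ∧ ¬ π i = π i0 := fun i hi => Finset.mem_filter.1 hi
  have hne12 : ∀ i ∈ S1, ∀ j ∈ S2, π j ≠ π i := fun i hi j hj h =>
    (m2 j hj).2 (h.trans (m1 i hi).2)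
  have cNN : ∀ j ∈ S2, ∀ i ∈ S1, Commute (N j) (N i) := fun j hj i hi =>
    (hcomm j (m2 j hj).1 i (m1 i hi).1 (hne12 i hi j hj)).1
  have cND : ∀ j ∈ S2, ∀ i ∈ S1, Commute (N j) (D i) := fun j hj i hi =>
    (hcomm j (m2 j hj).1 i (m1 i hi).1 (hne12 i hi j hj)).2.1
  have cDN : ∀ j ∈ S2, ∀ i ∈ S1, Commute (D j) (N i) := fun j hj i hi =>
    (hcomm i (m1 i hi).1 j (m2 j hj).1 (hne12 i hi j hj).symm).2.1.symm
  have cDD : ∀ j ∈ S2, ∀ i ∈ S1, Commute (D j) (D i) := fun j hj i hi =>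
    (hcomm j (m2 j hj).1 i (m1 i hi).1 (hne12 i hi j hj)).2.2.1
  have hrec : ∀ y z, syn N D S1 y (z + S1.card)
      = ∑ w ∈ Finset.range S1.card, Φ w (syn N D S1 y (z + w)) := by
    intro y z
    rw [← syn_shift, hΦ]
    exact Finset.sum_congr rfl fun w _ => by rw [syn_shift]
  -- injectivity of Q
  have hQ : ∀ j ∈ S2, ∀ y : V, (D j ^ S1.card) y
      = ∑ w ∈ Finset.range S1.card, Φ w ((D j ^ w) y) → y = 0 := by
    intro j hj y hy
    obtain ⟨u, hu⟩ := hsurj (fun z => (D j ^ z) y)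
    have htop : syn N D S1 u S1.card = (D j ^ S1.card) y := by
      rw [hΦ, hy]
      exact Finset.sum_congr rfl fun w hw => by rw [hu w (Finset.mem_range.1 hw)]
    have hall : ∀ z ≤ S1.card, syn N D S1 u z = (D j ^ z) y := by
      intro z hz
      rcases hz.lt_or_eq with h | h
      · exact hu z h
      · rw [h, htop]
    have hd := hl1 (fun i => D i (u i) - D j (u i)) (by
      intro z hz
      rw [syn_sub, syn_comm _ _ _ _ _ (D j) (cDN j hj) (cDD j hj)]
      have := syn_shift N D S1 u 1 z
      simp only [pow_one] at this
      rw [this, add_comm, hall _ hz, hall _ hz.le, pow_succ', sub_eq_zero]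
      rfl)
    have hu0 : ∀ i ∈ S1, u i = 0 := fun i hi =>
      (hcomm i (m1 i hi).1 j (m2 j hj).1 (hne12 i hi j hj).symm).2.2.2 _ (sub_eq_zero.1 (hd i hi))
    have h0 := hall 0 (Nat.zero_le _)
    rw [syn_congr N D S1 u (fun _ => 0) 0 hu0] at h0
    simpa [syn] using h0.symm
  set x2 : ι → V := fun i => (D i ^ S1.card) (x i)
      - ∑ w ∈ Finset.range S1.card, Φ w ((D i ^ w) (x i)) with hx2
  have hsyn2 : ∀ z, syn N D S2 x2 z = syn N D S2 x (z + S1.card)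
      - ∑ w ∈ Finset.range S1.card, Φ w (syn N D S2 x (z + w)) := by
    intro z
    rw [hx2, syn_sub, syn_shift, syn_sum, add_comm]
    congr 1
    refine Finset.sum_congr rfl fun w hw => ?_
    have hw := Finset.mem_range.1 hw
    rw [syn_comm N D S2 (fun i => (D i ^ w) (x i)) z (Φ w), syn_shift, add_comm]
    · intro j hj
      ext y
      exact hΦc (N j) (cNN j hj) (cND j hj) w hw y
    · intro j hj
      ext y
      exact hΦc (D j) (cDN j hj) (cDD j hj) w hw y
  have hz2 : ∀ z < S2.card, syn N D S2 x2 z = 0 := by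
    intro z hz
    have k : ∀ w ≤ S1.card, syn N D S2 x (z + w) = - syn N D S1 x (z + w) := by
      intro w hw
      have := hx (z + w) (by omega)
      rw [hsum] at this
      exact eq_neg_of_add_eq_zero_right this
    have k2 : ∑ w ∈ Finset.range S1.card, Φ w (syn N D S2 x (z + w))
        = - ∑ w ∈ Finset.range S1.card, Φ w (syn N D S1 x (z + w)) := by
      rw [← Finset.sum_neg_distrib]
      exact Finset.sum_congr rfl
        (fun w hw => by rw [k w (Finset.mem_range.1 hw).le, map_neg])
    rw [hsyn2, k _ le_rfl, hrec, k2, sub_self]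
  have hx2z : ∀ i ∈ S2, x2 i = 0 := by
    refine ih S2.card (by omega) S2 rfl ?_ ?_ x2 hz2
    · intro i hi j hj
      exact hcomm i (m2 i hi).1 j (m2 j hj).1
    · intro T hT
      exact hloc T (hT.trans (Finset.filter_subset _ _))
  have hxz : ∀ i ∈ S2, x i = 0 := fun i hi => hQ i hi _ (sub_eq_zero.1 (hx2z i hi))
  refine hl1 x (fun z hz => ?_) i0 (by simp [hS1, hi0])
  have := hx z (by omega)
  rw [hsum, syn_congr N D S2 x (fun _ => 0) z hxz] at this
  simpa [syn] using this

end AbstractPart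

section ConcretePart

variable {F : Type*} [Field F] {M s : ℕ}

/-- The operator with the signs of the kernel matrix acting on digit `p`. -/
def opN (F : Type*) [Field F] (p : Fin M) (q : ℕ) : Module.End F ((Fin M → Fin s) → F) where
  toFun y f := y f - if (f p : ℕ) = q then
    ∑ c : Fin s, (if (c : ℕ) = q then 0 else y (Function.update f p c)) else 0
  map_add' y y' := by
    ext f
    by_cases h : (f p : ℕ) = q
    · simp only [h, if_true, Pi.add_apply]
      have : ∀ c : Fin s, (if (c : ℕ) = q then 0 else
          (y (Function.update f p c) + y' (Function.update f p c)))
          = (if (c : ℕ) = q then 0 else y (Function.update f p c))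
          + (if (c : ℕ) = q then 0 else y' (Function.update f p c)) := by
        intro c; split_ifs <;> simp
      simp only [this, Finset.sum_add_distrib]
      ring
    · simp [h]
  map_smul' r y := by
    ext f
    by_cases h : (f p : ℕ) = q
    · simp only [h, if_true, Pi.smul_apply, smul_eq_mul, RingHom.id_apply, mul_sub,
        Finset.mul_sum, mul_ite, mul_zero]
    · simp [h]

/-- The diagonal operator. -/
def opD (lam : ℕ → F) (m : ℕ) (p : Fin M) : Module.End F ((Fin M → Fin s) → F) where
  toFun y f := lam (m * s + f p) * y f
  map_add' y y' := by ext f; simp [mul_add]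
  map_smul' r y := by ext f; simp [mul_left_comm]

lemma opN_apply (p : Fin M) (q : ℕ) (y : (Fin M → Fin s) → F) (f : Fin M → Fin s) :
    opN F p q y f = y f - if (f p : ℕ) = q then
    ∑ c : Fin s, (if (c : ℕ) = q then 0 else y (Function.update f p c)) else 0 := rfl

lemma opD_apply (lam : ℕ → F) (m : ℕ) (p : Fin M) (y : (Fin M → Fin s) → F)
    (f : Fin M → Fin s) : opD lam m p y f = lam (m * s + f p) * y f := rfl

lemma opD_pow_apply (lam : ℕ → F) (m : ℕ) (p : Fin M) (z : ℕ) (y : (Fin M → Fin s) → F)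
    (f : Fin M → Fin s) : (opD lam m p ^ z) y f = lam (m * s + f p) ^ z * y f := by
  induction z generalizing y with
  | zero => simp
  | succ z ih => rw [pow_succ, Module.End.mul_apply, ih, opD_apply]; ring

lemma opDD (lam : ℕ → F) (m m' : ℕ) (p p' : Fin M) :
    Commute (opD (s := s) lam m p) (opD lam m' p') := by
  refine LinearMap.ext fun y => funext fun f => ?_
  simp only [Module.End.mul_apply, opD_apply]
  ring

lemma opND (lam : ℕ → F) (m' q : ℕ) (p p' : Fin M) (h : p ≠ p') :
    Commute (opN (s := s) F p q) (opD lam m' p') := by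
  refine LinearMap.ext fun y => funext fun f => ?_
  simp only [Module.End.mul_apply, opD_apply, opN_apply, Function.update_of_ne h.symm]
  by_cases hq : (f p : ℕ) = q
  · simp only [hq, if_true, mul_sub, Finset.mul_sum, mul_ite, mul_zero]
  · simp [hq]

lemma opNN (q q' : ℕ) (p p' : Fin M) (h : p ≠ p') :
    Commute (opN (s := s) F p q) (opN F p' q') := by
  refine LinearMap.ext fun y => funext fun f => ?_
  simp only [Module.End.mul_apply, opN_apply, Function.update_of_ne h.symm,
    Function.update_of_ne h]
  by_cases hq : (f p : ℕ) = q <;> by_cases hq' : (f p' : ℕ) = q'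
  · simp only [hq, hq', if_true]
    have e : ∀ (q q' : ℕ) (g : Fin s → Fin s → F) (y : Fin s → F),
      (∑ c : Fin s, if (c : ℕ) = q then 0 else
        (y c - ∑ c' : Fin s, if (c' : ℕ) = q' then 0 else g c c'))
      = (∑ c : Fin s, if (c : ℕ) = q then 0 else y c)
        - ∑ c : Fin s, ∑ c' : Fin s, if (c : ℕ) = q ∨ (c' : ℕ) = q' then 0 else g c c' := by
      intro q q' g y
      rw [← Finset.sum_sub_distrib]
      refine Finset.sum_congr rfl fun c _ => ?_
      by_cases hc : (c : ℕ) = q <;> simp [hc]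
    rw [e, e, Finset.sum_comm]
    simp only [Function.update_comm h, or_comm]
    ring
  · simp [hq, hq']
  · simp [hq, hq']
  · simp [hq, hq']

lemma digit_fin (f : Fin M → Fin s) (u : Fin M) :
    digit s (finFunctionFinEquiv f : ℕ) u = f u := by
  have h := finFunctionFinEquiv_symm_apply_val (finFunctionFinEquiv f) u
  rw [Equiv.symm_apply_apply] at h
  exact h.symm

lemma digit_big (i u : ℕ) (hi : i < s ^ M) (hu : M ≤ u) : digit s i u = 0 := by
  unfold digit
  rcases Nat.eq_zero_or_pos s with h | h
  · subst h
    rcases Nat.eq_zero_or_pos M with h | h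
    · subst h; have : i = 0 := by simpa using hi
      simp [this]
    · simp [h.ne'] at hi
  · rw [Nat.div_eq_of_lt (hi.trans_le (Nat.pow_le_pow_right h hu)), Nat.zero_mod]

lemma Aent_fin (lam : ℕ → F) (g q z : ℕ) (p : Fin M) (f h : Fin M → Fin s) :
    Aent lam s g p q (finFunctionFinEquiv f : ℕ) (finFunctionFinEquiv h : ℕ) z
    = lam ((p * g + q) * s + h p) ^ z * ((if h = f then 1 else 0)
      - if (f p : ℕ) = q then ∑ c : Fin s, (if (c : ℕ) = q then 0 else
          if h = Function.update f p c then 1 else 0) else 0) := by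
  unfold Aent
  have e1 : (finFunctionFinEquiv f : ℕ) = (finFunctionFinEquiv h : ℕ) ↔ h = f := by
    rw [← Fin.ext_iff, finFunctionFinEquiv.injective.eq_iff, eq_comm]
  have e2 : (∀ u, u ≠ (p : ℕ) → digit s (finFunctionFinEquiv f : ℕ) u
      = digit s (finFunctionFinEquiv h : ℕ) u) ↔ ∀ u : Fin M, u ≠ p → f u = h u := by
    constructor
    · intro H u hu
      have := H u (fun h => hu (Fin.ext h))
      rw [digit_fin, digit_fin] at this
      exact Fin.ext this
    · intro H u hu
      by_cases hM : u < M
      · have := H ⟨u, hM⟩ (fun h => hu (congrArg Fin.val h))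
        have k := digit_fin f ⟨u, hM⟩
        have k' := digit_fin h ⟨u, hM⟩
        simp only at k k'
        rw [k, k', this]
      · rw [digit_big _ _ (Fin.is_lt _) (not_lt.1 hM), digit_big _ _ (Fin.is_lt _) (not_lt.1 hM)]
  have e3 : (p : ℕ) * s * g + q * s + h p = (p * g + q) * s + h p := by ring
  simp only [e1, e2, digit_fin, e3]
  by_cases hq : (f p : ℕ) = q
  · simp only [hq, if_true, true_and]
    by_cases hf : h = f
    · subst hf
      rw [Finset.sum_eq_zero]
      · simp
      · intro c _
        by_cases hc : (c : ℕ) = q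
        · simp [hc]
        · have : h ≠ Function.update h p c := by
            intro H
            have := congrFun H p
            simp only [Function.update_self] at this
            exact hc (by rw [← this, hq])
          simp [hc, this]
    · simp only [hf, if_false, zero_sub]
      by_cases hc : (h p : ℕ) ≠ q ∧ ∀ u : Fin M, u ≠ p → f u = h u
      · rw [if_pos hc, Finset.sum_eq_single (h p)]
        · have : h = Function.update f p (h p) := by
            ext u
            by_cases hu : u = p
            · subst hu; simp
            · rw [Function.update_of_ne hu, hc.2 u hu]
          rw [if_neg hc.1, if_pos this]; ring
        · intro c _ hcp
          have : h ≠ Function.update f p c := by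
            intro H
            have := congrFun H p
            simp only [Function.update_self] at this
            exact hcp this.symm
          simp [this]
        · simp
      · rw [if_neg hc, Finset.sum_eq_zero]
        · simp
        · intro c _
          by_cases hcq : (c : ℕ) = q
          · simp [hcq]
          · rw [if_neg hcq, if_neg]
            intro H
            apply hc
            subst H
            refine ⟨by simpa using hcq, fun u hu => by simp [hu]⟩
  · by_cases hf : h = f <;> simp [hq, hf]

lemma sum_Aent (lam : ℕ → F) (g q z : ℕ) (p : Fin M) (f : Fin M → Fin s) (y : ℕ → F) :
    ∑ j ∈ Finset.range (s ^ M),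
      Aent lam s g p q (finFunctionFinEquiv f : ℕ) j z * y j
    = opN F p q ((opD lam (p * g + q) p ^ z)
      (fun h : Fin M → Fin s => y (finFunctionFinEquiv h : ℕ))) f := by
  rw [Finset.sum_range, ← (finFunctionFinEquiv (m := s) (n := M)).sum_comp]
  simp only [Aent_fin, opN_apply, opD_pow_apply]
  simp only [mul_sub, sub_mul, Finset.sum_sub_distrib]
  congr 1
  · simp
  · by_cases hq : (f p : ℕ) = q
    · simp only [hq, if_true, Finset.mul_sum, Finset.sum_mul]
      rw [Finset.sum_comm]
      refine Finset.sum_congr rfl fun c _ => ?_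
      by_cases hc : (c : ℕ) = q
      · simp [hc]
      · simp [hc]
    · simp [hq]

lemma sum_range_mul' (G : ℕ → ℕ → F) (l v : ℕ) (hl : 0 < l) :
    ∑ κ ∈ Finset.range (l * v), G (κ / l) (κ % l)
    = ∑ m ∈ Finset.range v, ∑ j ∈ Finset.range l, G m j := by
  induction v with
  | zero => simp
  | succ v ih =>
    rw [Nat.mul_succ, Finset.sum_range_add, ih, Finset.sum_range_succ]
    congr 1
    refine Finset.sum_congr rfl fun j hj => ?_
    have hj := Finset.mem_range.1 hj
    rw [Nat.mul_add_div hl, Nat.div_eq_of_lt hj, Nat.mul_add_mod, Nat.mod_eq_of_lt hj, add_zero]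

lemma enum_eq (B : Finset ℕ) (m : ℕ) (hm : m < (B.sort (· ≤ ·)).length) :
    enum B m = (B.sort (· ≤ ·))[m] := by
  exact List.getD_eq_getElem _ _ hm

lemma enum_surj (B : Finset ℕ) (q : ℕ) (hq : q ∈ B) : ∃ m < B.card, enum B m = q := by
  have : q ∈ B.sort (· ≤ ·) := (Finset.mem_sort _).2 hq
  obtain ⟨m, hm, h⟩ := List.mem_iff_getElem.1 this
  exact ⟨m, by simpa using hm, by rw [enum_eq B m hm, h]⟩

lemma sum_enum (B : Finset ℕ) (G : ℕ → F) :
    ∑ m ∈ Finset.range B.card, G (enum B m) = ∑ q ∈ B, G q := by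
  refine Finset.sum_nbij (enum B) ?_ ?_ ?_ (fun _ _ => rfl)
  · intro m hm
    have hm : m < (B.sort (· ≤ ·)).length := by simpa using hm
    rw [enum_eq B m hm]
    exact (Finset.mem_sort _).1 (List.getElem_mem hm)
  · intro m hm m' hm' h
    have hm : m < (B.sort (· ≤ ·)).length := by simpa using hm
    have hm' : m' < (B.sort (· ≤ ·)).length := by simpa using hm'
    rw [enum_eq B m hm, enum_eq B m' hm'] at h
    exact (List.Nodup.getElem_inj_iff (Finset.sort_nodup B _)).1 h
  · intro q hq
    obtain ⟨m, hm, h⟩ := enum_surj B q hq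
    exact ⟨m, by simpa using hm, h⟩

lemma local_concrete (lam : ℕ → F) (g : ℕ) (p : Fin M) (B : Finset ℕ)
    (hdet : (AmatB lam s g (s ^ M) p B.card B).det ≠ 0)
    (x : ℕ → (Fin M → Fin s) → F)
    (hx : ∀ z < B.card, ∀ f, ∑ q ∈ B, opN F p q ((opD lam (p * g + q) p ^ z) (x q)) f = 0) :
    ∀ q ∈ B, x q = 0 := by
  intro q0 hq0
  ext f0
  have hl : 0 < s ^ M := lt_of_le_of_lt (Nat.zero_le _) (finFunctionFinEquiv f0).is_lt
  have hv : 0 < B.card := Finset.card_pos.2 ⟨q0, hq0⟩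
  set Y : ℕ → ℕ → F := fun q j =>
    if h : j < s ^ M then x q (finFunctionFinEquiv.symm ⟨j, h⟩) else 0 with hY
  have hYx : ∀ q (h : Fin M → Fin s), Y q (finFunctionFinEquiv h : ℕ) = x q h := by
    intro q h
    simp only [hY]
    rw [dif_pos (Fin.is_lt _)]
    simp only [Fin.eta, Equiv.symm_apply_apply]
  have hker := Matrix.eq_zero_of_mulVec_eq_zero hdet
    (v := fun κ => Y (enum B ((κ : ℕ) / s ^ M)) ((κ : ℕ) % s ^ M)) (by
    ext ρ
    have hρ : (ρ : ℕ) / B.card < s ^ M := by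
      rw [Nat.div_lt_iff_lt_mul hv]; exact ρ.is_lt
    obtain ⟨f, hf⟩ := finFunctionFinEquiv.surjective (⟨(ρ : ℕ) / B.card, hρ⟩ : Fin (s ^ M))
    have hf' : (ρ : ℕ) / B.card = (finFunctionFinEquiv f : ℕ) := by rw [hf]
    have h1 := hx ((ρ : ℕ) % B.card) (Nat.mod_lt _ hv) f
    simp only [Matrix.mulVec, dotProduct, AmatB, Matrix.of_apply, Pi.zero_apply]
    rw [← Finset.sum_range (fun κ => Aent lam s g p (enum B (κ / s ^ M)) ((ρ : ℕ) / B.card)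
      (κ % s ^ M) ((ρ : ℕ) % B.card) * Y (enum B (κ / s ^ M)) (κ % s ^ M)),
      sum_range_mul' (fun m j => Aent lam s g p (enum B m) ((ρ : ℕ) / B.card)
      j ((ρ : ℕ) % B.card) * Y (enum B m) j) _ _ hl,
      sum_enum B (fun q => ∑ j ∈ Finset.range (s ^ M), Aent lam s g p q ((ρ : ℕ) / B.card)
      j ((ρ : ℕ) % B.card) * Y q j), ← h1]
    refine Finset.sum_congr rfl fun q _ => ?_
    rw [hf', sum_Aent]
    simp only [hYx])
  obtain ⟨m, hm, hmq⟩ := enum_surj B q0 hq0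
  have hlt : s ^ M * m + (finFunctionFinEquiv f0 : ℕ) < s ^ M * B.card := by
    calc _ < s ^ M * m + s ^ M := by have := (finFunctionFinEquiv f0).is_lt; omega
      _ = s ^ M * (m + 1) := by ring
      _ ≤ _ := Nat.mul_le_mul_left _ hm
  have := congrFun hker ⟨_, hlt⟩
  simp only [Pi.zero_apply] at this
  rw [Nat.mul_add_div hl, Nat.div_eq_of_lt (Fin.is_lt _), Nat.mul_add_mod,
    Nat.mod_eq_of_lt (Fin.is_lt _), add_zero, hmq, hYx] at this
  exact this

end ConcretePart

/-- optimal-access repair of the first `s` nodes of a group, second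
construction, group size `s+1`: if two codewords agree, for every helper node `j ∈ H`
(`|H| = d`, `a(s+1)+b ∉ H`), on all symbols `C_j(i)` with `i_a = b` (`b < s`), then they
agree on the whole node `a(s+1)+b`. -/
theorem statement14 (F : Type*) [Field F] [Fintype F] (n k d s ℓ r : ℕ)
    (hk : 1 ≤ k) (hkn : k < n) (hd₁ : k + 1 ≤ d) (hd₂ : d ≤ n - 1)
    (hs : s = d - k + 1) (hdiv : (s + 1) ∣ n) (hℓ : ℓ = s ^ (n / (s + 1))) (hr : r = n - k)
    (lam : ℕ → F)
    (hdist : ∀ i < n * s, ∀ j < n * s, lam i = lam j → i = j)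
    (hloc : LocalConstraints lam s (s + 1) ℓ (n / (s + 1)))
    (a b : ℕ) (ha : a < n / (s + 1)) (hb : b < s)
    (H : Finset ℕ) (hHsub : H ⊆ Finset.range n) (hHnotin : a * (s + 1) + b ∉ H)
    (hHcard : H.card = d)
    (C C' : ℕ → ℕ → F)
    (hC : InCode lam s (s + 1) ℓ r n C) (hC' : InCode lam s (s + 1) ℓ r n C')
    (hagree : ∀ j ∈ H, ∀ i < ℓ, digit s i a = b → C j i = C' j i) :
    ∀ i < ℓ, C (a * (s + 1) + b) i = C' (a * (s + 1) + b) i := by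
  classical
  obtain ⟨M, hM⟩ : ∃ M, M = n / (s + 1) := ⟨_, rfl⟩
  rw [← hM] at hℓ hloc ha
  subst hℓ
  have hnM : n = M * (s + 1) := by rw [hM, Nat.div_mul_cancel hdiv]
  have hs0 : 0 < s := by omega
  set m0 := a * (s + 1) + b with hm0
  set pa : Fin M := ⟨a, ha⟩ with hpa
  set fb : Fin s := ⟨b, hb⟩ with hfb
  have hdivlt : ∀ m < n, m / (s + 1) < M := fun m hm => by
    rw [Nat.div_lt_iff_lt_mul (Nat.succ_pos s), ← hnM]; exact hm
  obtain ⟨pf, hpf⟩ : ∃ pf : ℕ → Fin M, ∀ m < n, (pf m : ℕ) = m / (s + 1) :=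
    ⟨fun m => if h : m / (s + 1) < M then ⟨_, h⟩ else pa, fun m hm => by simp [hdivlt m hm]⟩
  have hpf' : ∀ m < n, (pf m : ℕ) * (s + 1) + m % (s + 1) = m := fun m hm => by
    rw [hpf m hm, mul_comm]; exact Nat.div_add_mod m (s + 1)
  have hm0n : m0 < n := by
    have : (a + 1) * (s + 1) ≤ M * (s + 1) := Nat.mul_le_mul_right _ ha
    rw [hnM]; nlinarith
  have hm0d : m0 / (s + 1) = a := by
    rw [hm0, mul_comm, Nat.mul_add_div (Nat.succ_pos s), Nat.div_eq_of_lt (by omega), add_zero]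
  have hm0m : m0 % (s + 1) = b := by
    rw [hm0, mul_comm, Nat.mul_add_mod, Nat.mod_eq_of_lt (by omega)]
  have hpm0 : pf m0 = pa := Fin.ext (by rw [hpf m0 hm0n, hm0d])
  have hmod : ∀ m < n, pf m = pa → m ≠ m0 → m % (s + 1) ≠ b := by
    intro m hm h hne hb'
    apply hne
    rw [← hpf' m hm, h, hb']
  have hdis : ∀ m < n, ∀ m' < n, ∀ c < s, ∀ c' < s,
      lam (m * s + c) = lam (m' * s + c') → m = m' ∧ c = c' := by
    intro m hm m' hm' c hc c' hc' h
    have lt : ∀ m < n, ∀ c < s, m * s + c < n * s := by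
      intro m hm c hc
      have : (m + 1) * s ≤ n * s := Nat.mul_le_mul_right _ hm
      nlinarith
    have e := hdist _ (lt m hm c hc) _ (lt m' hm' c' hc') h
    have e1 : (m * s + c) / s = m := by
      rw [mul_comm, Nat.mul_add_div hs0, Nat.div_eq_of_lt hc, add_zero]
    have e2 : (m' * s + c') / s = m' := by
      rw [mul_comm, Nat.mul_add_div hs0, Nat.div_eq_of_lt hc', add_zero]
    have : m = m' := by rw [← e1, ← e2, e]
    subst this
    exact ⟨rfl, by omega⟩
  -- difference codeword
  set Y : ℕ → (Fin M → Fin s) → F := fun m f =>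
    C m (finFunctionFinEquiv f : ℕ) - C' m (finFunctionFinEquiv f : ℕ) with hY
  have hr0 : 0 < r := by omega
  have hcode : ∀ z < r, ∀ f : Fin M → Fin s, ∑ m ∈ Finset.range n,
      opN F (pf m) (m % (s + 1)) ((opD lam m (pf m) ^ z) (Y m)) f = 0 := by
    intro z hz f
    have hlt : r * (finFunctionFinEquiv f : ℕ) + z < s ^ M * r := by
      have h1 : (finFunctionFinEquiv f : ℕ) + 1 ≤ s ^ M := (finFunctionFinEquiv f).is_lt
      have := Nat.mul_le_mul_left r h1
      rw [mul_comm (s ^ M)]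
      rw [mul_add] at this
      omega
    have h1 := hC _ hlt
    have h2 := hC' _ hlt
    rw [Nat.mul_add_div hr0, Nat.div_eq_of_lt hz, Nat.mul_add_mod, Nat.mod_eq_of_lt hz,
      add_zero] at h1 h2
    rw [← sub_eq_zero.2 (h1.trans h2.symm), ← Finset.sum_sub_distrib]
    refine Finset.sum_congr rfl fun m hm => ?_
    have hm := Finset.mem_range.1 hm
    have k1 := sum_Aent lam (s + 1) (m % (s + 1)) z (pf m) f (fun j => C m j - C' m j)
    rw [hpf' m hm] at k1
    rw [← k1, ← Finset.sum_sub_distrib, hpf m hm]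
    exact Finset.sum_congr rfl fun j _ => by ring
  have hYH : ∀ m ∈ H, ∀ f : Fin M → Fin s, f pa = fb → Y m f = 0 := by
    intro m hm f hf
    have := hagree m hm (finFunctionFinEquiv f : ℕ) (Fin.is_lt _)
      ((digit_fin f pa).trans (by rw [hf]))
    simp only [hY, this, sub_self]
  -- the operators of the restricted system
  let N : ℕ ⊕ ℕ → Module.End F ((Fin M → Fin s) → F) := fun i => match i with
    | Sum.inl c => if c = b then 1 else -1
    | Sum.inr m => if pf m = pa then 1 else opN F (pf m) (m % (s + 1))
  let D : ℕ ⊕ ℕ → Module.End F ((Fin M → Fin s) → F) := fun i => match i with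
    | Sum.inl c => lam (m0 * s + c) • (1 : Module.End F ((Fin M → Fin s) → F))
    | Sum.inr m => if pf m = pa then lam (m * s + b) • (1 : Module.End F ((Fin M → Fin s) → F))
        else opD lam m (pf m)
  let π : ℕ ⊕ ℕ → (ℕ ⊕ ℕ) ⊕ Fin M := fun i => match i with
    | Sum.inl c => Sum.inl (Sum.inl c)
    | Sum.inr m => if pf m = pa then Sum.inl (Sum.inr m) else Sum.inr (pf m)
  let x : ℕ ⊕ ℕ → (Fin M → Fin s) → F := fun i => match i with
    | Sum.inl c => fun f => if h : c < s then Y m0 (Function.update f pa ⟨c, h⟩) else 0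
    | Sum.inr m => fun f => Y m (Function.update f pa fb)
  set R := Finset.range n \ insert m0 H with hR
  set S : Finset (ℕ ⊕ ℕ) := (Finset.range s).disjSum R with hS
  have hRn : ∀ m ∈ R, m < n ∧ m ≠ m0 := by
    intro m hm
    simp only [hR, Finset.mem_sdiff, Finset.mem_range, Finset.mem_insert, not_or] at hm
    exact ⟨hm.1, hm.2.1⟩
  have hins : insert m0 H ⊆ Finset.range n :=
    Finset.insert_subset (Finset.mem_range.2 hm0n) hHsub
  have hcard : S.card = r := by
    rw [hS, Finset.card_disjSum, hR, Finset.card_sdiff_of_subset hins,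
      Finset.card_insert_of_notMem hHnotin, Finset.card_range, Finset.card_range, hHcard]
    omega
  have smulpow : ∀ (t : F) (z : ℕ) (y : (Fin M → Fin s) → F) (f : Fin M → Fin s),
      ((t • (1 : Module.End F ((Fin M → Fin s) → F))) ^ z) y f = t ^ z * y f := by
    intro t z y f
    rw [smul_pow, one_pow]
    simp
  have hsyn : ∀ z < S.card, syn N D S x z = 0 := by
    intro z hz
    rw [hcard] at hz
    ext f
    set f' := Function.update f pa fb with hf'
    have hf'a : f' pa = fb := by simp [hf']
    have hc := hcode z hz f'
    rw [← Finset.sum_sdiff hins, Finset.sum_insert hHnotin] at hc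
    -- helpers vanish
    have ga : ∀ m < n, pf m = pa → m ≠ m0 →
        opN F (pf m) (m % (s + 1)) ((opD lam m (pf m) ^ z) (Y m)) f'
        = lam (m * s + b) ^ z * Y m f' := by
      intro m hm hp hne
      rw [opN_apply, opD_pow_apply, hp, hf'a, if_neg, sub_zero]
      exact fun h => hmod m hm hp hne h.symm
    have gb : ∀ m, pf m ≠ pa →
        opN F (pf m) (m % (s + 1)) ((opD lam m (pf m) ^ z) (Y m)) f'
        = opN F (pf m) (m % (s + 1)) ((opD lam m (pf m) ^ z)
          (fun f => Y m (Function.update f pa fb))) f := by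
      intro m hp
      simp only [opN_apply, opD_pow_apply, hf', Function.update_of_ne hp,
        Function.update_comm hp, Function.update_self]
    have hH0 : ∑ m ∈ H, opN F (pf m) (m % (s + 1)) ((opD lam m (pf m) ^ z) (Y m)) f' = 0 := by
      refine Finset.sum_eq_zero fun m hm => ?_
      by_cases hp : pf m = pa
      · rw [ga m (Finset.mem_range.1 (hHsub hm)) hp (fun h => hHnotin (h ▸ hm)),
          hYH m hm f' hf'a, mul_zero]
      · rw [gb m hp]
        have : (fun f => Y m (Function.update f pa fb)) = 0 := by
          ext f
          exact hYH m hm _ (by simp)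
        rw [this]
        simp
    rw [hH0, add_zero] at hc
    simp only [syn, hS, Finset.sum_disjSum, Finset.sum_apply, Pi.zero_apply]
    rw [← hc, add_comm]
    congr 1
    · refine Finset.sum_congr rfl fun m hm => ?_
      by_cases hp : pf m = pa
      · rw [ga m (hRn m hm).1 hp (hRn m hm).2]
        simp only [N, D, x, if_pos hp, Module.End.one_apply, smulpow]
        rfl
      · rw [gb m hp]
        simp only [N, D, x, if_neg hp]
    · rw [opN_apply, hpm0, hm0m, hf'a, if_pos rfl]
      simp only [opD_pow_apply, hf'a, Function.update_self]
      rw [Finset.sum_range, ← Finset.sum_erase_add _ _ (Finset.mem_univ fb),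
        ← Finset.sum_erase_add (a := fb) (s := Finset.univ) (f := fun c : Fin s =>
          if (c : ℕ) = b then (0 : F) else _) (Finset.mem_univ fb), add_comm, sub_eq_add_neg]
      congr 1
      · have : (fb : ℕ) = b := rfl
        simp only [N, D, x, this, if_true, Module.End.one_apply, smulpow, hb, dif_pos]
        rfl
      · rw [if_pos rfl, add_zero, ← Finset.sum_neg_distrib]
        refine Finset.sum_congr rfl fun c hc => ?_
        have hcb : (c : ℕ) ≠ b := fun h => (Finset.ne_of_mem_erase hc) (Fin.ext h)
        simp only [N, D, x, hcb, if_false, LinearMap.neg_apply, Module.End.one_apply,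
          Pi.neg_apply, smulpow, Fin.is_lt, dif_pos, hf', Function.update_idem, Fin.eta]
  have hpil : ∀ i ∈ S, ∀ j ∈ S, π i ≠ π j → Commute (N i) (N j) ∧ Commute (N i) (D j) ∧
      Commute (D i) (D j) ∧ ∀ y, D i y = D j y → y = 0 := by
    have hN1 : ∀ c T, Commute (N (Sum.inl c)) T := by
      intro c T
      simp only [N]
      split_ifs
      · exact Commute.one_left T
      · exact (Commute.one_left T).neg_left
    have hD1 : ∀ c T, Commute (D (Sum.inl c)) T := fun c T =>
      (Commute.one_left T).smul_left _
    have hN2 : ∀ m, pf m = pa → ∀ T, Commute (N (Sum.inr m)) T := by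
      intro m hp T
      simp only [N, if_pos hp]
      exact Commute.one_left T
    have hD2 : ∀ m, pf m = pa → ∀ T, Commute (D (Sum.inr m)) T := by
      intro m hp T
      simp only [D, if_pos hp]
      exact (Commute.one_left T).smul_left _
    -- description of D
    have hDdesc : ∀ i ∈ S, ∀ f : Fin M → Fin s, ∃ m < n, ∃ c < s, (∀ y, D i y f
        = lam (m * s + c) * y f) ∧ ((∃ c', i = Sum.inl c' ∧ c = c' ∧ m = m0) ∨
          (i = Sum.inr m ∧ m ≠ m0)) := by
      intro i hi f
      rcases i with c | m
      · have hc : c < s := by simpa [hS] using hi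
        exact ⟨m0, hm0n, c, hc, fun y => rfl, Or.inl ⟨c, rfl, rfl, rfl⟩⟩
      · have hm : m ∈ R := by simpa [hS] using hi
        obtain ⟨h1, h2⟩ := hRn m hm
        by_cases hp : pf m = pa
        · refine ⟨m, h1, b, hb, fun y => ?_, Or.inr ⟨rfl, h2⟩⟩
          simp only [D, if_pos hp]
          rfl
        · refine ⟨m, h1, f (pf m), Fin.is_lt _, fun y => ?_, Or.inr ⟨rfl, h2⟩⟩
          simp only [D, if_neg hp]
          rfl
    intro i hi j hj hij
    have hne : i ≠ j := fun h => hij (by rw [h])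
    have hinj : ∀ y, D i y = D j y → y = 0 := by
      intro y hy
      ext f
      obtain ⟨m, hm, c, hc, e, h⟩ := hDdesc i hi f
      obtain ⟨m', hm', c', hc', e', h'⟩ := hDdesc j hj f
      have := congrFun hy f
      rw [e, e'] at this
      rcases mul_eq_mul_right_iff.1 this with h3 | h3
      · exfalso
        obtain ⟨h4, h5⟩ := hdis m hm m' hm' c hc c' hc' h3
        apply hne
        rcases h with ⟨c1, rfl, rfl, rfl⟩ | ⟨rfl, h6⟩ <;>
        rcases h' with ⟨c2, rfl, rfl, rfl⟩ | ⟨rfl, h7⟩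
        · rw [h5]
        · exact absurd h4.symm h7
        · exact absurd h4 h6
        · rw [h4]
      · exact h3
    rcases i with c | m
    · exact ⟨hN1 _ _, hN1 _ _, hD1 _ _, hinj⟩
    rcases j with c | m'
    · exact ⟨(hN1 _ _).symm, (hD1 _ _).symm, (hD1 _ _).symm, hinj⟩
    by_cases hp : pf m = pa
    · exact ⟨hN2 _ hp _, hN2 _ hp _, hD2 _ hp _, hinj⟩
    by_cases hp' : pf m' = pa
    · exact ⟨(hN2 _ hp' _).symm, (hD2 _ hp' _).symm, (hD2 _ hp' _).symm, hinj⟩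
    have hpp : pf m ≠ pf m' := by
      intro h
      apply hij
      simp only [π, if_neg hp, if_neg hp']
      rw [h]
    refine ⟨?_, ?_, ?_, hinj⟩
    · simp only [N, if_neg hp, if_neg hp']
      exact opNN _ _ _ _ hpp
    · simp only [N, D, if_neg hp, if_neg hp']
      exact opND _ _ _ _ _ hpp
    · simp only [D, if_neg hp, if_neg hp']
      exact opDD _ _ _ _ _
  have hlocal : ∀ T ⊆ S, T.Nonempty → (∃ g, ∀ i ∈ T, π i = g) →
      ∀ x : ℕ ⊕ ℕ → (Fin M → Fin s) → F,
      (∀ z < T.card, syn N D T x z = 0) → ∀ i ∈ T, x i = 0 := by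
    rintro T hT hTne ⟨g, hg⟩ x hx i hi
    rcases g with g | p
    · -- singleton groups
      have hig : ∀ j ∈ T, j = g := by
        intro j hj
        have := hg j hj
        rcases j with c | m
        · exact Sum.inl.inj this
        · simp only [π] at this
          split_ifs at this
          exact Sum.inl.inj this
      have hTi : T = {i} := by
        ext j
        rw [Finset.mem_singleton]
        constructor
        · intro hj; rw [hig j hj, hig i hi]
        · rintro rfl; exact hi
      have h0 := hx 0 hTne.card_pos
      rw [hTi] at h0
      simp only [syn, Finset.sum_singleton, pow_zero, Module.End.one_apply] at h0
      have hgi := hg i hi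
      rcases i with c | m
      · simp only [N] at h0
        split_ifs at h0
        · simpa using h0
        · simpa using h0
      · simp only [π] at hgi
        split_ifs at hgi with hp
        simp only [N, if_pos hp] at h0
        simpa using h0
    · -- a full group
      have hform : ∀ j ∈ T, ∃ m < n, j = Sum.inr m ∧ pf m = p ∧ pf m ≠ pa := by
        intro j hj
        have h1 := hg j hj
        have h2 := hT hj
        rcases j with c | m
        · simp [π] at h1
        · have hm : m ∈ R := by simpa [hS] using h2
          simp only [π] at h1
          split_ifs at h1 with hp
          exact ⟨m, (hRn m hm).1, rfl, Sum.inr.inj h1, hp⟩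
      set nd : ℕ → ℕ ⊕ ℕ := fun q => Sum.inr ((p : ℕ) * (s + 1) + q) with hnd
      have hndinj : Function.Injective nd := by
        intro q q' h
        have := Sum.inr.inj h
        omega
      set B := (Finset.range (s + 1)).filter (fun q => nd q ∈ T) with hB
      have hTB : T = B.image nd := by
        ext j
        simp only [hB, Finset.mem_image, Finset.mem_filter, Finset.mem_range]
        constructor
        · intro hj
          obtain ⟨m, hm, rfl, h1, h2⟩ := hform j hj
          have : nd (m % (s + 1)) = Sum.inr m := by
            simp only [hnd]
            rw [← h1, hpf' m hm]
          exact ⟨m % (s + 1), ⟨Nat.mod_lt _ (Nat.succ_pos s), by rw [this]; exact hj⟩, this⟩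
        · rintro ⟨q, ⟨_, h⟩, rfl⟩
          exact h
      have hcB : T.card = B.card := by
        rw [hTB, Finset.card_image_of_injective _ hndinj]
      have hBne : B.Nonempty := by
        rw [← Finset.card_pos, ← hcB]; exact hTne.card_pos
      have key := local_concrete lam (s + 1) p B
        (hloc p p.is_lt B (Finset.filter_subset _ _) hBne) (fun q => x (nd q)) (by
          intro z hz f
          have h := congrFun (hx z (by rw [hcB]; exact hz)) f
          simp only [syn] at h
          rw [hTB, Finset.sum_image (fun _ _ _ _ h => hndinj h), Finset.sum_apply] at h
          rw [Pi.zero_apply] at h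
          rw [← h]
          refine Finset.sum_congr rfl fun q hq => ?_
          have hq := Finset.mem_filter.1 hq
          obtain ⟨m, hm, h1, h2, h3⟩ := hform _ hq.2
          have h4 : (p : ℕ) * (s + 1) + q = m := Sum.inr.inj h1
          have h5 : m % (s + 1) = q := by
            rw [← h4, mul_comm, Nat.mul_add_mod, Nat.mod_eq_of_lt (Finset.mem_range.1 hq.1)]
          rw [h1]
          simp only [N, D, if_neg h3]
          rw [h5, h2, h4])
      rw [hTB] at hi
      obtain ⟨q, hq, rfl⟩ := Finset.mem_image.1 hi
      exact key q hq
  have hfin := global_inj N D π _ S rfl hpil hlocal x hsyn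
  intro i hi
  obtain ⟨f, hf⟩ := finFunctionFinEquiv.surjective (⟨i, hi⟩ : Fin (s ^ M))
  have h1 := congrFun (hfin (Sum.inl (f pa : ℕ)) (by simp [hS])) f
  simp only [x, Fin.is_lt, dif_pos, Fin.eta, Function.update_eq_self, Pi.zero_apply, hY, hf] at h1
  exact sub_eq_zero.1 h1
end

section
/- Suppose λ_0, …, λ_{ns−1} are pairwise distinct and satisfy the local constraints. Fix a ∈ {0,…,n/(s+1)−1} and a helper set H ⊆ {0,…,n−1} \ {a(s+1)+s} with |H| = d; let H_1 = H ∩ {a(s+1)+b : b ∈ {0,…,s−1}} and H_2 = H \ H_1. If two codewords C = (C_0,…,C_{n−1}) and C′ = (C′_0,…,C′_{n−1}) of the array code satisfy: (i) C_j(i) = C′_j(i) for every j = a(s+1)+b ∈ H_1 and every i ∈ {0,…,ℓ−1} with i_a = b, and (ii) Σ_{e=0}^{s−1} C_j(i + e·s^a) = Σ_{e=0}^{s−1} C′_j(i + e·s^a) for every j ∈ H_2 and every i ∈ {0,…,ℓ−1} with i_a = 0, then C_{a(s+1)+s} = C′_{a(s+1)+s}. In other words, the last node of group a can be repaired from any d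 helper nodes by downloading ℓ/s symbols from each helper, achieving the optimal repair bandwidth dℓ/(d−k+1). -/
open Matrix

open Polynomial in
/-- kernel matrix signs -/
def Kent (F : Type*) [Field F] {s : ℕ} (b : ℕ) (i j : Fin s) : F :=
  if i = j then 1 else if (i : ℕ) = b then -1 else 0

lemma Kent_sum_lt (F : Type*) [Field F] {s : ℕ} (b j : Fin s) :
    ∑ e, Kent F (b : ℕ) e j = if j = b then 1 else 0 := by
  have h : ∀ e, Kent F (b : ℕ) e j =
      (if e = j then 1 else 0) - (if e = b then (if j = b then 0 else 1) else 0) := by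
    intro e
    unfold Kent
    by_cases h1 : e = j <;> by_cases h2 : e = b <;> by_cases h3 : j = b <;>
      simp_all [Fin.ext_iff]
  simp_rw [h, Finset.sum_sub_distrib]
  by_cases h3 : j = b <;> simp [h3]

lemma Kent_sum_ge (F : Type*) [Field F] {s : ℕ} (b : ℕ) (hb : s ≤ b) (j : Fin s) :
    ∑ e, Kent F b e j = 1 := by
  have h : ∀ e, Kent F b e j = (if e = j then 1 else 0) := by
    intro e
    unfold Kent
    have : (e : ℕ) ≠ b := by omega
    simp [this]
  simp_rw [h]
  simp

/-- polynomial form of the local constraint -/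
def LocP {F : Type*} [Field F] {s : ℕ} (B : Finset ℕ) (l : ℕ → Fin s → F) : Prop :=
  ∀ g : Fin s → Polynomial F, (∀ i, (g i).degree < B.card) →
    (∀ b ∈ B, ∀ j, ∑ i, Kent F b i j * (g i).eval (l b j) = 0) → g = 0

open Polynomial in
lemma extract {F : Type*} [Field F] {s : ℕ} (B : Finset ℕ) (l : ℕ → Fin s → F)
    (h : LocP B l) :
    ∃ P : Fin s → Fin s → F[X], (∀ i j, (P i j).natDegree < B.card + 1) ∧
      (∀ b ∈ B, ∀ i0 j, ∑ i, Kent F b i j * (P i0 i).eval (l b j) = 0) ∧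
      (∀ μ, (∀ b ∈ B, ∀ j, μ ≠ l b j) → ∀ y : Fin s → F,
        (∀ i0, ∑ i, (P i0 i).eval μ * y i = 0) → y = 0) := by
  classical
  let L : (Fin s → degreeLT F B.card) →ₗ[F] (B → Fin s → F) :=
    LinearMap.pi fun b => LinearMap.pi fun j => ∑ i,
      (Kent F (b : ℕ) i j) • ((Polynomial.leval (l b j)).comp
        ((degreeLT F B.card).subtype.comp (LinearMap.proj i)))
  have hL : ∀ g b j, L g b j = ∑ i, Kent F (b : ℕ) i j * ((g i : F[X])).eval (l b j) := by
    intro g b j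
    simp [L, Polynomial.leval]
  have hinj : Function.Injective L := by
    rw [injective_iff_map_eq_zero]
    intro g hg
    have := h (fun i => (g i : F[X])) (fun i => mem_degreeLT.1 (g i).2) (by
      intro b hb j
      rw [← hL g ⟨b, hb⟩ j, hg]; rfl)
    funext i
    exact Subtype.ext (congrFun this i)
  have : Module.Finite F (degreeLT F B.card) :=
    Module.Finite.equiv (degreeLTEquiv F B.card).symm
  have hfr : Module.finrank F (Fin s → degreeLT F B.card) = Module.finrank F (B → Fin s → F) := by
    rw [Module.finrank_pi_fintype, Module.finrank_pi_fintype]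
    simp [(degreeLTEquiv F B.card).finrank_eq, mul_comm]
  have hsurj : Function.Surjective L :=
    (LinearMap.injective_iff_surjective_of_finrank_eq_finrank hfr).1 hinj
  choose R hR using fun i0 : Fin s =>
    hsurj (fun b j => Kent F (b : ℕ) i0 j * (l b j) ^ B.card)
  let P : Fin s → Fin s → F[X] := fun i0 i => (if i0 = i then X ^ B.card else 0) - (R i0 i : F[X])
  have hRdeg : ∀ i0 i, ((R i0 i : F[X])).degree < B.card := fun i0 i => mem_degreeLT.1 (R i0 i).2
  have hPco : ∀ i0 i, (P i0 i).coeff B.card = if i0 = i then 1 else 0 := by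
    intro i0 i
    simp only [P, coeff_sub, coeff_eq_zero_of_degree_lt (hRdeg i0 i)]
    split_ifs <;> simp
  have hPdeg : ∀ i0 i, (P i0 i).degree ≤ B.card := by
    intro i0 i
    refine (degree_sub_le _ _).trans (max_le ?_ (hRdeg i0 i).le)
    split_ifs
    · exact degree_X_pow_le _
    · simp
  have hP1 : ∀ b ∈ B, ∀ i0 j, ∑ i, Kent F b i j * (P i0 i).eval (l b j) = 0 := by
    intro b hb i0 j
    have := congrFun (congrFun (hR i0) ⟨b, hb⟩) j
    rw [hL] at this
    simp only [P, eval_sub, mul_sub, Finset.sum_sub_distrib, this]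
    simp [apply_ite (Polynomial.eval (l b j)), Finset.sum_ite_eq]
  refine ⟨P, fun i j => Nat.lt_succ_of_le (natDegree_le_of_degree_le (hPdeg i j)), hP1, ?_⟩
  intro μ hμ y hy
  let M : Matrix (Fin s) (Fin s) F := Matrix.of fun i0 i => (P i0 i).eval μ
  have hdet : M.det ≠ 0 := by
    intro h0
    obtain ⟨w, hw0, hw⟩ := Matrix.exists_vecMul_eq_zero_iff.2 h0
    apply hw0
    let f : Fin s → F[X] := fun i => ∑ i0, C (w i0) * P i0 i
    have hfdeg : ∀ i, (f i).degree ≤ B.card := by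
      intro i
      refine (degree_sum_le _ _).trans (Finset.sup_le fun i0 _ => ?_)
      rw [← smul_eq_C_mul]
      exact (degree_smul_le _ _).trans (hPdeg i0 i)
    have hfroot : ∀ i, (f i).IsRoot μ := by
      intro i
      have := congrFun hw i
      simp only [Matrix.vecMul, dotProduct, M, Matrix.of_apply, Pi.zero_apply] at this
      simp [f, IsRoot, eval_finsetSum, this]
    have hfco : ∀ i, (f i).coeff B.card = w i := by
      intro i
      simp [f, hPco]
    choose g hg using fun i => dvd_iff_isRoot.2 (hfroot i)
    have hg0 : g = 0 := by
      apply h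
      · intro i
        by_cases hgi : g i = 0
        · rw [hgi]; simp
        · have h1 := hfdeg i
          rw [hg i, degree_mul, degree_X_sub_C, degree_eq_natDegree hgi] at h1
          rw [degree_eq_natDegree hgi]
          norm_cast at h1 ⊢
          omega
      · intro b hb j
        have hne : l b j - μ ≠ 0 := sub_ne_zero.2 (hμ b hb j).symm
        apply mul_left_cancel₀ hne
        rw [mul_zero, Finset.mul_sum]
        have e1 : ∀ i, (l b j - μ) * (Kent F b i j * (g i).eval (l b j)) =
            ∑ i0, w i0 * (Kent F b i j * (P i0 i).eval (l b j)) := by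
          intro i
          have : (f i).eval (l b j) = (l b j - μ) * (g i).eval (l b j) := by
            rw [hg i]; simp
          calc _ = Kent F b i j * (f i).eval (l b j) := by rw [this]; ring
            _ = _ := by
              simp only [f, eval_finsetSum, eval_mul, eval_C, Finset.mul_sum]
              exact Finset.sum_congr rfl fun _ _ => by ring
        simp_rw [e1]
        rw [Finset.sum_comm]
        refine Finset.sum_eq_zero fun i0 _ => ?_
        rw [← Finset.mul_sum, hP1 b hb, mul_zero]
    funext i
    rw [← hfco i, hg i, hg0]; simp
  apply Matrix.eq_zero_of_mulVec_eq_zero hdet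
  funext i0
  exact hy i0

lemma vander {F κ : Type*} [Field F] (K : Finset κ) (μ : κ → F)
    (hμ : Set.InjOn μ K) (r : ℕ) (hr : K.card ≤ r) (E : κ → F)
    (h : ∀ z < r, ∑ c ∈ K, μ c ^ z * E c = 0) : ∀ c ∈ K, E c = 0 := by
  classical
  intro c hc
  have key : ∀ p : Polynomial F, p.natDegree < r → ∑ c ∈ K, p.eval (μ c) * E c = 0 := by
    intro p hp
    simp_rw [Polynomial.eval_eq_sum_range' hp, Finset.sum_mul]
    rw [Finset.sum_comm]
    refine Finset.sum_eq_zero fun z hz => ?_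
    have := h z (Finset.mem_range.1 hz)
    calc _ = p.coeff z * ∑ c ∈ K, μ c ^ z * E c := by
          rw [Finset.mul_sum]; exact Finset.sum_congr rfl fun _ _ => by ring
      _ = 0 := by rw [this, mul_zero]
  have hcard : 0 < K.card := Finset.card_pos.2 ⟨c, hc⟩
  have := key (∏ c' ∈ K.erase c, (Polynomial.X - Polynomial.C (μ c'))) (by
    rw [Polynomial.natDegree_prod_of_monic _ _ (fun i _ => Polynomial.monic_X_sub_C _)]
    simp [Finset.card_erase_of_mem hc]
    omega)
  rw [Finset.sum_eq_single_of_mem c hc] at this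
  · rcases mul_eq_zero.1 this with h0 | h0
    · rw [Polynomial.eval_prod, Finset.prod_eq_zero_iff] at h0
      obtain ⟨c', hc', h0⟩ := h0
      simp [sub_eq_zero] at h0
      exact absurd (hμ hc (Finset.mem_of_mem_erase hc') h0).symm (Finset.ne_of_mem_erase hc')
    · exact h0
  · intro c' hc' hne
    rw [Polynomial.eval_prod, Finset.prod_eq_zero (Finset.mem_erase.2 ⟨hne, hc'⟩) (by simp), zero_mul]

lemma mainInd {F κ ι : Type*} [Field F] [DecidableEq ι] {s : ℕ} (K : Finset κ) (μ : κ → F)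
    (hμ : Set.InjOn μ K) (l : ι → ℕ → Fin s → F) (B : ι → Finset ℕ) (G : Finset ι)
    (hloc : ∀ a ∈ G, LocP (B a) (l a))
    (hμl : ∀ c ∈ K, ∀ a ∈ G, ∀ b ∈ B a, ∀ j, μ c ≠ l a b j) :
    ∀ (r : ℕ), K.card + ∑ a ∈ G, (B a).card ≤ r →
    ∀ (E : κ → (ι → Fin s) → F) (D : ι → ℕ → (ι → Fin s) → F),
    (∀ x, ∀ z < r, ∑ c ∈ K, μ c ^ z * E c x + ∑ a ∈ G, ∑ b ∈ B a, ∑ j,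
      Kent F b (x a) j * l a b j ^ z * D a b (Function.update x a j) = 0) →
    ∀ c ∈ K, ∀ x, E c x = 0 := by
  induction G using Finset.induction_on with
  | empty =>
    intro r hr E D h c hc x
    refine vander K μ hμ r (by simpa using hr) (fun c => E c x) (fun z hz => ?_) c hc
    simpa using h x z hz
  | insert a1 G ha1 ih =>
    intro r hr E D h c hc x
    obtain ⟨P, hPd, hP1, hP2⟩ := extract (B a1) (l a1) (hloc a1 (Finset.mem_insert_self _ _))
    rw [Finset.sum_insert ha1] at hr
    have key := ih (fun a ha => hloc a (Finset.mem_insert_of_mem ha))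
      (fun c hc a ha => hμl c hc a (Finset.mem_insert_of_mem ha)) (r - (B a1).card) (by omega)
      (fun c x => ∑ i, (P (x a1) i).eval (μ c) * E c (Function.update x a1 i))
      (fun a b y => ∑ i, (P (y a1) i).eval (l a b (y a)) * D a b (Function.update y a1 i))
      (by
        intro x z hz
        have hsum : ∑ i, ∑ u ∈ Finset.range ((B a1).card + 1), (P (x a1) i).coeff u *
          (∑ c ∈ K, μ c ^ (z + u) * E c (Function.update x a1 i) +
            ∑ a ∈ insert a1 G, ∑ b ∈ B a, ∑ j, Kent F b ((Function.update x a1 i) a) j *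
              l a b j ^ (z + u) * D a b (Function.update (Function.update x a1 i) a j)) = 0 := by
          refine Finset.sum_eq_zero fun i _ => Finset.sum_eq_zero fun u hu => ?_
          rw [h _ _ (by have := Finset.mem_range.1 hu; omega), mul_zero]
        have hev : ∀ i (t : F) (w : F), ∑ u ∈ Finset.range ((B a1).card + 1),
            (P (x a1) i).coeff u * (t ^ (z + u) * w) = t ^ z * ((P (x a1) i).eval t * w) := by
          intro i t w
          rw [Polynomial.eval_eq_sum_range' (hPd _ _), Finset.sum_mul, Finset.mul_sum]
          exact Finset.sum_congr rfl fun _ _ => by ring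
        rw [← hsum]
        simp_rw [mul_add, Finset.sum_add_distrib]
        congr 1
        · simp_rw [Finset.mul_sum]
          rw [Finset.sum_comm]
          refine Finset.sum_congr rfl fun i _ => ?_
          rw [Finset.sum_comm]
          refine Finset.sum_congr rfl fun c _ => ?_
          rw [hev]
        · have hsw : ∀ i, ∑ u ∈ Finset.range ((B a1).card + 1), (P (x a1) i).coeff u *
              (∑ a ∈ insert a1 G, ∑ b ∈ B a, ∑ j, Kent F b ((Function.update x a1 i) a) j *
              l a b j ^ (z + u) * D a b (Function.update (Function.update x a1 i) a j)) =
              ∑ a ∈ insert a1 G, ∑ b ∈ B a, ∑ j, Kent F b ((Function.update x a1 i) a) j *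
              (l a b j ^ z * ((P (x a1) i).eval (l a b j) *
                D a b (Function.update (Function.update x a1 i) a j))) := by
            intro i
            simp_rw [Finset.mul_sum]
            rw [Finset.sum_comm]
            refine Finset.sum_congr rfl fun a _ => ?_
            rw [Finset.sum_comm]
            refine Finset.sum_congr rfl fun b _ => ?_
            rw [Finset.sum_comm]
            refine Finset.sum_congr rfl fun j _ => ?_
            rw [← hev, Finset.mul_sum]
            exact Finset.sum_congr rfl fun _ _ => by ring
          simp_rw [hsw]
          rw [Finset.sum_comm, Finset.sum_insert ha1]
          rw [show ∑ i, ∑ b ∈ B a1, ∑ j, Kent F b ((Function.update x a1 i) a1) j *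
              (l a1 b j ^ z * ((P (x a1) i).eval (l a1 b j) *
                D a1 b (Function.update (Function.update x a1 i) a1 j))) = 0 from ?_, zero_add]
          · refine Finset.sum_congr rfl fun a ha => ?_
            have hne : a ≠ a1 := fun h => ha1 (h ▸ ha)
            conv_rhs => rw [Finset.sum_comm]
            refine Finset.sum_congr rfl fun b _ => ?_
            conv_rhs => rw [Finset.sum_comm]
            refine Finset.sum_congr rfl fun j _ => ?_
            rw [Finset.mul_sum]
            refine Finset.sum_congr rfl fun i _ => ?_
            rw [Function.update_of_ne hne.symm, Function.update_self, Function.update_of_ne hne,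
              Function.update_comm hne]
            ring
          · rw [Finset.sum_comm]
            refine Finset.sum_eq_zero fun b hb => ?_
            rw [Finset.sum_comm]
            refine Finset.sum_eq_zero fun j _ => ?_
            simp_rw [Function.update_idem, Function.update_self]
            have := hP1 b hb (x a1) j
            calc _ = l a1 b j ^ z * D a1 b (Function.update x a1 j) *
                  ∑ i, Kent F b i j * (P (x a1) i).eval (l a1 b j) := by
                  rw [Finset.mul_sum]; exact Finset.sum_congr rfl fun _ _ => by ring
              _ = 0 := by rw [this, mul_zero]) c hc
    have := hP2 (μ c) (hμl c hc a1 (Finset.mem_insert_self _ _))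
      (fun i => E c (Function.update x a1 i)) (fun i0 => by
        have := key (Function.update x a1 i0)
        simpa using this)
    have := congrFun this (x a1)
    simpa using this

/-- encode a digit vector as a natural number -/
def enc {N s : ℕ} (x : Fin N → Fin s) : ℕ := (finFunctionFinEquiv x : ℕ)

lemma enc_lt {N s : ℕ} (x : Fin N → Fin s) : enc x < s ^ N := (finFunctionFinEquiv x).2

lemma exists_enc {N s : ℕ} (i : ℕ) (hi : i < s ^ N) : ∃ x : Fin N → Fin s, enc x = i :=
  ⟨finFunctionFinEquiv.symm ⟨i, hi⟩, by simp [enc]⟩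

lemma enc_inj {N s : ℕ} {x y : Fin N → Fin s} : enc x = enc y ↔ x = y := by
  unfold enc
  rw [← Fin.ext_iff, finFunctionFinEquiv.injective.eq_iff]

lemma digit_enc {N s : ℕ} (x : Fin N → Fin s) (u : Fin N) : digit s (enc x) u = x u := by
  have h : finFunctionFinEquiv.symm (finFunctionFinEquiv x) u = x u := by simp
  exact congrArg Fin.val h

lemma digit_enc_ge {N s : ℕ} (x : Fin N → Fin s) (u : ℕ) (hu : N ≤ u) :
    digit s (enc x) u = 0 := by
  unfold digit
  rcases Nat.eq_zero_or_pos s with h0 | h0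
  · subst h0
    rcases Nat.eq_zero_or_pos N with h1 | h1
    · subst h1; simp [enc]
    · exact (x ⟨0, h1⟩).elim0
  · rw [Nat.div_eq_of_lt (lt_of_lt_of_le (enc_lt x) (Nat.pow_le_pow_right h0 hu)), Nat.zero_mod]

lemma enc_update {N s : ℕ} (x : Fin N → Fin s) (a : Fin N) (e e0 : Fin s) (he0 : (e0 : ℕ) = 0) :
    enc (Function.update x a e) = enc (Function.update x a e0) + e * s ^ (a : ℕ) := by
  unfold enc
  rw [finFunctionFinEquiv_apply, finFunctionFinEquiv_apply,
    ← Finset.add_sum_erase _ _ (Finset.mem_univ a), ← Finset.add_sum_erase _ _ (Finset.mem_univ a)]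
  have : ∀ e, ∑ i ∈ Finset.univ.erase a, ((Function.update x a e) i : ℕ) * s ^ (i : ℕ) =
      ∑ i ∈ Finset.univ.erase a, (x i : ℕ) * s ^ (i : ℕ) := by
    intro e
    refine Finset.sum_congr rfl fun i hi => ?_
    rw [Function.update_of_ne (Finset.ne_of_mem_erase hi)]
  rw [this, this]
  simp [he0, add_comm]

lemma Aent_enc {F : Type*} [Field F] (lam : ℕ → F) {N s : ℕ} (g : ℕ) (a : Fin N) (b z : ℕ)
    (x y : Fin N → Fin s) :
    Aent lam s g a b (enc x) (enc y) z = if (∀ u, u ≠ a → x u = y u) then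
      Kent F b (x a) (y a) * lam (a * s * g + b * s + y a) ^ z else 0 := by
  have hagree : (∀ u : ℕ, u ≠ a → digit s (enc x) u = digit s (enc y) u) ↔
      (∀ u, u ≠ a → x u = y u) := by
    constructor
    · intro h u hu
      have := h u (fun h => hu (Fin.ext h))
      rw [digit_enc, digit_enc] at this
      exact Fin.ext this
    · intro h u hu
      by_cases huN : u < N
      · have := h ⟨u, huN⟩ (fun h => hu (congrArg Fin.val h))
        have h1 := digit_enc x ⟨u, huN⟩
        have h2 := digit_enc y ⟨u, huN⟩
        simp only at h1 h2
        rw [h1, h2, this]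
      · rw [digit_enc_ge x u (by omega), digit_enc_ge y u (by omega)]
  unfold Aent Kent
  simp only [hagree, digit_enc, enc_inj]
  by_cases h : ∀ u, u ≠ a → x u = y u
  · have hxy : x = y ↔ x a = y a := by
      constructor
      · intro h; rw [h]
      · intro h1; funext u
        by_cases hu : u = a
        · rw [hu, h1]
        · exact h u hu
    rw [if_pos h]
    simp only [eq_true h, hxy, and_true]
    by_cases h1 : x a = y a
    · simp [h1]
    · have h1' : (x a : ℕ) ≠ y a := fun h => h1 (Fin.ext h)
      by_cases h2 : (x a : ℕ) = b
      · have : (y a : ℕ) ≠ b := by omega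
        simp [h1, h2, this]
      · simp [h1, h2]
  · have : x ≠ y := by rintro rfl; exact h fun _ _ => rfl
    simp [h, this]

lemma sum_agree {F : Type*} [AddCommMonoid F] {N s : ℕ} (a : Fin N) (x : Fin N → Fin s)
    (f : (Fin N → Fin s) → F) :
    ∑ y, (if (∀ u, u ≠ a → x u = y u) then f y else 0) = ∑ i, f (Function.update x a i) := by
  classical
  rw [← Finset.sum_filter]
  symm
  refine Finset.sum_bij (fun i _ => Function.update x a i) ?_ ?_ ?_ ?_
  · intro i _
    simp only [Finset.mem_filter, Finset.mem_univ, true_and]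
    intro u hu
    rw [Function.update_of_ne hu]
  · intro i _ j _ h
    simpa using congrFun h a
  · intro y hy
    simp only [Finset.mem_filter, Finset.mem_univ, true_and] at hy
    refine ⟨y a, Finset.mem_univ _, ?_⟩
    funext u
    by_cases hu : u = a
    · subst hu; simp
    · rw [Function.update_of_ne hu, hy u hu]
  · intros; rfl

lemma sum_range_enc {F : Type*} [AddCommMonoid F] {N s : ℕ} (f : ℕ → F) :
    ∑ j ∈ Finset.range (s ^ N), f j = ∑ y : Fin N → Fin s, f (enc y) := by
  rw [Finset.sum_range]
  exact (Equiv.sum_comp finFunctionFinEquiv (fun j : Fin (s ^ N) => f j)).symm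

lemma enum_mem (B : Finset ℕ) (m : ℕ) (hm : m < B.card) : enum B m ∈ B := by
  unfold enum
  rw [List.getD_eq_getElem _ _ (by simpa using hm)]
  exact (Finset.mem_sort (· ≤ ·)).1 (List.getElem_mem _)

lemma locP_of_det {F : Type*} [Field F] (lam : ℕ → F) {N s : ℕ} (hs : 0 < s) (g : ℕ)
    (a : Fin N) (B : Finset ℕ) (h : (AmatB lam s g (s ^ N) a B.card B).det ≠ 0) :
    LocP B (fun b (j : Fin s) => lam (a * s * g + b * s + j)) := by
  classical
  intro p hdeg hp
  let zero : Fin N → Fin s := fun _ => ⟨0, hs⟩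
  let w : Fin (s ^ N * B.card) → F := fun ρ =>
    (fun (x : Fin N → Fin s) => if (∀ u, u ≠ a → zero u = x u) then
      (p (x a)).coeff ((ρ : ℕ) % B.card) else 0) (finFunctionFinEquiv.symm ρ.divNat)
  have hdm : ∀ (x : Fin N → Fin s) (z : Fin B.card),
      ((finProdFinEquiv (finFunctionFinEquiv x, z) : Fin (s ^ N * B.card)) : ℕ) % B.card = z ∧
      ((finProdFinEquiv (finFunctionFinEquiv x, z) : Fin (s ^ N * B.card)) : ℕ) / B.card = enc x ∧
      (finProdFinEquiv (finFunctionFinEquiv x, z) : Fin (s ^ N * B.card)).divNat =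
        finFunctionFinEquiv x := by
    intro x z
    have h1 := finProdFinEquiv.symm_apply_apply (finFunctionFinEquiv x, z)
    have h2 := congrArg Prod.fst h1
    have h3 := congrArg Prod.snd h1
    exact ⟨congrArg Fin.val h3, congrArg Fin.val h2, h2⟩
  have hw : ∀ x z, w (finProdFinEquiv (finFunctionFinEquiv x, z)) =
      if (∀ u, u ≠ a → zero u = x u) then (p (x a)).coeff z else 0 := by
    intro x z
    simp only [w, (hdm x z).1, (hdm x z).2.2, Equiv.symm_apply_apply]
  have hv : w ᵥ* (AmatB lam s g (s ^ N) a B.card B) = 0 := by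
    funext κ
    have hℓ : 0 < s ^ N := pow_pos hs _
    have hκ : (κ : ℕ) / s ^ N < B.card := Nat.div_lt_of_lt_mul κ.2
    have hb := enum_mem B _ hκ
    obtain ⟨y, hy⟩ := exists_enc (N := N) (s := s) ((κ : ℕ) % s ^ N) (Nat.mod_lt _ hℓ)
    simp only [Matrix.vecMul, dotProduct, AmatB, Matrix.of_apply, Pi.zero_apply]
    generalize enum B ((κ : ℕ) / s ^ N) = b at hb
    rw [← hy, ← Equiv.sum_comp finProdFinEquiv, Fintype.sum_prod_type,
      ← Equiv.sum_comp finFunctionFinEquiv]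
    simp_rw [hw, (hdm _ _).1, (hdm _ _).2.1, Aent_enc, ite_mul, zero_mul]
    have hsw : ∀ x : Fin N → Fin s, (∑ z : Fin B.card, if (∀ u, u ≠ a → zero u = x u) then
        (p (x a)).coeff z * (if (∀ u, u ≠ a → x u = y u) then
          Kent F b (x a) (y a) * lam (a * s * g + b * s + y a) ^ (z : ℕ) else 0) else 0) =
        if (∀ u, u ≠ a → zero u = x u) then (if (∀ u, u ≠ a → x u = y u) then
          Kent F b (x a) (y a) * (p (x a)).eval (lam (a * s * g + b * s + y a)) else 0) else 0 := by
      intro x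
      split_ifs
      · rw [Polynomial.eval_eq_sum_range' (n := B.card) (by
          by_cases h0 : p (x a) = 0
          · rw [h0, Polynomial.natDegree_zero]; exact Finset.card_pos.2 ⟨b, hb⟩
          · exact (Polynomial.natDegree_lt_iff_degree_lt h0).2 (hdeg _)), Finset.sum_range,
          Finset.mul_sum]
        exact Finset.sum_congr rfl fun _ _ => by ring
      · simp
      · simp
    simp_rw [hsw]
    rw [sum_agree a zero]
    have hag : ∀ i, (∀ u, u ≠ a → Function.update zero a i u = y u) ↔
        (∀ u, u ≠ a → zero u = y u) := by
      intro i
      refine forall_congr' fun u => forall_congr' fun hu => ?_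
      rw [Function.update_of_ne hu]
    simp only [hag, Function.update_self]
    by_cases h0 : ∀ u, u ≠ a → zero u = y u
    · simp only [if_pos h0]
      simpa using hp b hb (y a)
    · simp [h0]
  have hw0 := Matrix.eq_zero_of_vecMul_eq_zero h hv
  funext i
  ext z
  by_cases hz : z < B.card
  · have := congrFun hw0 (finProdFinEquiv (finFunctionFinEquiv (Function.update zero a i), ⟨z, hz⟩))
    rw [hw, if_pos (fun u hu => by rw [Function.update_of_ne hu])] at this
    simpa using this
  · simp only [Pi.zero_apply, Polynomial.coeff_zero]
    exact Polynomial.coeff_eq_zero_of_degree_lt ((hdeg i).trans_le (by exact_mod_cast not_lt.1 hz))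

lemma sum_range_groups {M : Type*} [AddCommMonoid M] (N g : ℕ) (f : ℕ → M) :
    ∑ m ∈ Finset.range (N * g), f m = ∑ a : Fin N, ∑ b ∈ Finset.range g, f (a * g + b) := by
  rw [Finset.sum_range, ← Equiv.sum_comp finProdFinEquiv, Fintype.sum_prod_type]
  refine Finset.sum_congr rfl fun a _ => ?_
  rw [Finset.sum_range]
  refine Finset.sum_congr rfl fun b _ => ?_
  congr 1
  simp [finProdFinEquiv, add_comm, mul_comm]

lemma idx_inj {s a b j a' b' j' : ℕ} (hb : b ≤ s) (hb' : b' ≤ s) (hj : j < s) (hj' : j' < s)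
    (h : a * s * (s + 1) + b * s + j = a' * s * (s + 1) + b' * s + j') :
    a = a' ∧ b = b' ∧ j = j' := by
  have e : ∀ a b j, a * s * (s + 1) + b * s + j = j + s * (b + (s + 1) * a) := by
    intros; ring
  rw [e, e] at h
  have hs : 0 < s := by omega
  have h1 := congrArg (· % s) h
  have h2 := congrArg (· / s) h
  simp only [Nat.add_mul_mod_self_left, Nat.mod_eq_of_lt hj, Nat.mod_eq_of_lt hj',
    Nat.add_mul_div_left _ _ hs, Nat.div_eq_of_lt hj, Nat.div_eq_of_lt hj', zero_add] at h1 h2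
  have h3 := congrArg (· % (s + 1)) h2
  have h4 := congrArg (· / (s + 1)) h2
  simp only [Nat.add_mul_mod_self_left, Nat.mod_eq_of_lt (Nat.lt_succ_of_le hb),
    Nat.mod_eq_of_lt (Nat.lt_succ_of_le hb'),
    Nat.add_mul_div_left _ _ (Nat.succ_pos s), Nat.div_eq_of_lt (Nat.lt_succ_of_le hb),
    Nat.div_eq_of_lt (Nat.lt_succ_of_le hb'), zero_add] at h3 h4
  exact ⟨h4, h3, h1⟩

lemma idx_lt {N s a b j : ℕ} (ha : a < N) (hb : b ≤ s) (hj : j < s) :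
    a * s * (s + 1) + b * s + j < N * (s + 1) * s := by
  have h1 : a * (s + 1) + b + 1 ≤ N * (s + 1) := by
    have : (a + 1) * (s + 1) ≤ N * (s + 1) := Nat.mul_le_mul_right _ ha
    linarith
  have h2 := Nat.mul_le_mul_right s h1
  nlinarith

lemma inCode_enc {F : Type*} [Field F] (lam : ℕ → F) {N s r : ℕ} (C : ℕ → ℕ → F)
    (h : InCode lam s (s + 1) (s ^ N) r (N * (s + 1)) C) (x : Fin N → Fin s) (z : ℕ) (hz : z < r) :
    ∑ a : Fin N, ∑ b ∈ Finset.range (s + 1), ∑ j, Kent F b (x a) j *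
      lam (a * s * (s + 1) + b * s + j) ^ z * C (a * (s + 1) + b) (enc (Function.update x a j)) = 0 := by
  classical
  have h1 := h (z + r * enc x) (by
    have := enc_lt x
    have := Nat.mul_le_mul_left r (Nat.succ_le_of_lt this)
    rw [mul_comm (s ^ N)]
    have e : r * (enc x).succ = r * enc x + r := by rw [Nat.succ_eq_add_one]; ring
    omega)
  rw [sum_range_groups] at h1
  rw [← h1]
  refine Finset.sum_congr rfl fun a _ => Finset.sum_congr rfl fun b hb => ?_
  have hb := Finset.mem_range.1 hb
  have hr : 0 < r := by omega
  have e1 : ((a : ℕ) * (s + 1) + b) / (s + 1) = a := by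
    rw [mul_comm, Nat.mul_add_div (Nat.succ_pos s), Nat.div_eq_of_lt hb, add_zero]
  have e2 : ((a : ℕ) * (s + 1) + b) % (s + 1) = b := by
    rw [mul_comm, Nat.mul_add_mod, Nat.mod_eq_of_lt hb]
  rw [e1, e2, Nat.add_mul_div_left _ _ hr, Nat.add_mul_mod_self_left, Nat.div_eq_of_lt hz,
    Nat.mod_eq_of_lt hz, zero_add, sum_range_enc]
  simp_rw [Aent_enc, ite_mul, zero_mul]
  rw [sum_agree]
  simp

/-- repair of the last node of a group, second construction, group size
`s+1`: helpers `j ∈ H₁` (in group `a`, so `j = a(s+1)+b` with `b < s`) provide the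
symbols `C_j(i)` with `i_a = b`, and helpers `j ∈ H₂ = H \ H₁` provide the sums
`Σ_{e<s} C_j(i + e·s^a)` for `i_a = 0`. If two codewords agree on all this downloaded
data, they agree on the whole node `a(s+1)+s`. -/
theorem statement15 (F : Type*) [Field F] [Fintype F] (n k d s ℓ r : ℕ)
    (hk : 1 ≤ k) (hkn : k < n) (hd₁ : k + 1 ≤ d) (hd₂ : d ≤ n - 1)
    (hs : s = d - k + 1) (hdiv : (s + 1) ∣ n) (hℓ : ℓ = s ^ (n / (s + 1))) (hr : r = n - k)
    (lam : ℕ → F)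
    (hdist : ∀ i < n * s, ∀ j < n * s, lam i = lam j → i = j)
    (hloc : LocalConstraints lam s (s + 1) ℓ (n / (s + 1)))
    (a : ℕ) (ha : a < n / (s + 1))
    (H : Finset ℕ) (hHsub : H ⊆ Finset.range n) (hHnotin : a * (s + 1) + s ∉ H)
    (hHcard : H.card = d)
    (C C' : ℕ → ℕ → F)
    (hC : InCode lam s (s + 1) ℓ r n C) (hC' : InCode lam s (s + 1) ℓ r n C')
    (hagree₁ : ∀ j ∈ H, a * (s + 1) ≤ j → j < a * (s + 1) + s →
      ∀ i < ℓ, digit s i a = j - a * (s + 1) → C j i = C' j i)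
    (hagree₂ : ∀ j ∈ H, (j < a * (s + 1) ∨ a * (s + 1) + s ≤ j) →
      ∀ i < ℓ, digit s i a = 0 →
        ∑ e ∈ Finset.range s, C j (i + e * s ^ a) =
          ∑ e ∈ Finset.range s, C' j (i + e * s ^ a)) :
    ∀ i < ℓ, C (a * (s + 1) + s) i = C' (a * (s + 1) + s) i := by
  classical
  obtain ⟨N, hN⟩ : ∃ N, N = n / (s + 1) := ⟨_, rfl⟩
  have hn : n = N * (s + 1) := by rw [hN, Nat.div_mul_cancel hdiv]
  rw [← hN] at ha hloc hℓ
  clear hN hdiv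
  subst hℓ
  have hs2 : 0 < s := by omega
  let A : Fin N := ⟨a, ha⟩
  have hdist' : ∀ (a₁ a₂ : Fin N) (b₁ b₂ : ℕ) (j₁ j₂ : Fin s), b₁ ≤ s → b₂ ≤ s →
      lam (a₁ * s * (s + 1) + b₁ * s + j₁) = lam (a₂ * s * (s + 1) + b₂ * s + j₂) →
      a₁ = a₂ ∧ b₁ = b₂ ∧ j₁ = j₂ := by
    intro a₁ a₂ b₁ b₂ j₁ j₂ h1 h2 h
    have := hdist _ (by rw [hn]; exact idx_lt a₁.2 h1 j₁.2) _
      (by rw [hn]; exact idx_lt a₂.2 h2 j₂.2) h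
    obtain ⟨e1, e2, e3⟩ := idx_inj h1 h2 j₁.2 j₂.2 this
    exact ⟨Fin.ext e1, e2, Fin.ext e3⟩
  let Dv : Fin N → ℕ → (Fin N → Fin s) → F := fun a' b x =>
    C (a' * (s + 1) + b) (enc x) - C' (a' * (s + 1) + b) (enc x)
  let l : Fin N → ℕ → Fin s → F := fun a' b j => lam (a' * s * (s + 1) + b * s + j)
  have hpar : ∀ x : Fin N → Fin s, ∀ z < r, ∑ a' : Fin N, ∑ b ∈ Finset.range (s + 1), ∑ j,
      Kent F b (x a') j * l a' b j ^ z * Dv a' b (Function.update x a' j) = 0 := by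
    intro x z hz
    rw [hn] at hC hC'
    have h1 := inCode_enc lam C hC x z hz
    have h2 := inCode_enc lam C' hC' x z hz
    simp only [l, Dv, mul_sub, Finset.sum_sub_distrib]
    rw [h1, h2, sub_zero]
  let B : Fin N → Finset ℕ := fun a' =>
    (Finset.range (s + 1)).filter fun b => (a' : ℕ) * (s + 1) + b ∉ H
  let K1 : Finset (Fin s) := Finset.univ.filter fun b => a * (s + 1) + (b : ℕ) ∉ H
  let K : Finset (Fin s ⊕ Fin s) := K1.disjSum Finset.univ
  let μ : Fin s ⊕ Fin s → F := Sum.elim (fun b => l A b b) (fun e => l A s e)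
  let E : Fin s ⊕ Fin s → (Fin N → Fin s) → F :=
    Sum.elim (fun b x => Dv A b (Function.update x A b)) (fun e x => Dv A s (Function.update x A e))
  let DD : Fin N → ℕ → (Fin N → Fin s) → F := fun a' b x =>
    ∑ e, Dv a' b (Function.update x A e)
  have hlt : ∀ (a' : Fin N) (b : ℕ), b < s + 1 → a' ≠ A →
      ((a' : ℕ) * (s + 1) + b < a * (s + 1) ∨ a * (s + 1) + s ≤ (a' : ℕ) * (s + 1) + b) := by
    intro a' b hb hne
    have hne' : (a' : ℕ) ≠ a := fun h => hne (Fin.ext h)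
    rcases Nat.lt_or_gt_of_ne hne' with h | h
    · left
      have := Nat.mul_le_mul_right (s + 1) (Nat.succ_le_of_lt h)
      rw [Nat.succ_mul] at this
      omega
    · right
      have := Nat.mul_le_mul_right (s + 1) (Nat.succ_le_of_lt h)
      rw [Nat.succ_mul] at this
      omega
  have hDD : ∀ (a' : Fin N) (b : ℕ), b < s + 1 → a' ≠ A → (a' : ℕ) * (s + 1) + b ∈ H →
      ∀ x, DD a' b x = 0 := by
    intro a' b hb hne hH x
    have h1 := hagree₂ _ hH (hlt a' b hb hne) (enc (Function.update x A ⟨0, hs2⟩)) (enc_lt _)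
      (by
        have := digit_enc (Function.update x A ⟨0, hs2⟩) A
        rw [Function.update_self] at this
        exact this)
    rw [Finset.sum_range, Finset.sum_range] at h1
    simp only [DD, Dv, Finset.sum_sub_distrib]
    rw [sub_eq_zero]
    have e : ∀ e : Fin s, enc (Function.update x A e) =
        enc (Function.update x A ⟨0, hs2⟩) + e * s ^ a := fun e => enc_update x A e ⟨0, hs2⟩ rfl
    calc _ = _ := Finset.sum_congr rfl fun i _ => by rw [e i]
      _ = _ := h1
      _ = _ := Finset.sum_congr rfl fun i _ => by rw [e i]
  have hE0 : ∀ b : Fin s, a * (s + 1) + (b : ℕ) ∈ H → ∀ x, Dv A b (Function.update x A b) = 0 := by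
    intro b hH x
    have h1 := hagree₁ _ hH (by omega) (by omega) (enc (Function.update x A b)) (enc_lt _)
      (by
        have := digit_enc (Function.update x A b) A
        rw [Function.update_self] at this
        rw [Nat.add_sub_cancel_left]
        exact this)
    exact sub_eq_zero.2 h1
  have hred : ∀ x, ∀ z < r, ∑ c ∈ K, μ c ^ z * E c x + ∑ a' ∈ Finset.univ.erase A, ∑ b ∈ B a', ∑ j,
      Kent F b (x a') j * l a' b j ^ z * DD a' b (Function.update x a' j) = 0 := by
    intro x z hz
    have h0 : ∑ e, ∑ a' : Fin N, ∑ b ∈ Finset.range (s + 1), ∑ j,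
        Kent F b (Function.update x A e a') j * l a' b j ^ z *
          Dv a' b (Function.update (Function.update x A e) a' j) = 0 :=
      Finset.sum_eq_zero fun e _ => hpar _ z hz
    rw [Finset.sum_comm, ← Finset.add_sum_erase _ _ (Finset.mem_univ A)] at h0
    rw [← h0]
    congr 1
    · have hcol : ∀ b, ∑ e, ∑ j, Kent F b (Function.update x A e A) j * l A b j ^ z *
          Dv A b (Function.update (Function.update x A e) A j) =
          ∑ j, (∑ e, Kent F b e j) * (l A b j ^ z * Dv A b (Function.update x A j)) := by
        intro b
        rw [Finset.sum_comm]
        refine Finset.sum_congr rfl fun j _ => ?_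
        rw [Finset.sum_mul]
        refine Finset.sum_congr rfl fun e _ => ?_
        rw [Function.update_idem, Function.update_self, mul_assoc]
      rw [Finset.sum_comm]
      simp_rw [hcol]
      rw [Finset.sum_range_succ, Finset.sum_range, Finset.sum_disjSum]
      simp_rw [Kent_sum_lt, Kent_sum_ge F s le_rfl]
      congr 1
      · simp only [K1, Finset.sum_filter, ite_mul, one_mul, zero_mul]
        refine Finset.sum_congr rfl fun b _ => ?_
        rw [Finset.sum_ite_eq' Finset.univ b, if_pos (Finset.mem_univ _)]
        split_ifs with hb
        · rw [hE0 b hb x, mul_zero]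
        · rfl
      · simp only [one_mul]
        rfl
    · refine Finset.sum_congr rfl fun a' ha' => ?_
      have hne := Finset.ne_of_mem_erase ha'
      conv_rhs => rw [Finset.sum_comm]
      simp only [B, Finset.sum_filter]
      refine Finset.sum_congr rfl fun b hb => ?_
      have hT : ∑ e, ∑ j, Kent F b (Function.update x A e a') j * l a' b j ^ z *
          Dv a' b (Function.update (Function.update x A e) a' j) =
          ∑ j, Kent F b (x a') j * l a' b j ^ z * DD a' b (Function.update x a' j) := by
        rw [Finset.sum_comm]
        refine Finset.sum_congr rfl fun j _ => ?_
        simp only [DD]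
        rw [Finset.mul_sum]
        refine Finset.sum_congr rfl fun e _ => ?_
        rw [Function.update_of_ne hne, Function.update_comm hne]
      rw [hT]
      split_ifs with hH
      · symm
        refine Finset.sum_eq_zero fun j _ => ?_
        rw [hDD a' b (Finset.mem_range.1 hb) hne hH, mul_zero]
      · rfl
  have hBle : ∀ a', ∀ b ∈ B a', b ≤ s := by
    intro a' b hb
    have := Finset.mem_range.1 (Finset.mem_filter.1 hb).1
    omega
  have hcard : K.card + ∑ a' ∈ Finset.univ.erase A, (B a').card ≤ r := by
    have h1 : ∑ a', (B a').card = n - d := by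
      have e1 : ∑ m ∈ Finset.range (N * (s + 1)), (if m ∉ H then 1 else 0) =
          ∑ a', (B a').card := by
        rw [sum_range_groups]
        simp only [B, Finset.card_filter]
      rw [← e1, ← Finset.card_filter, ← hn, ← hHcard]
      have : (Finset.range n).filter (fun m => m ∉ H) = Finset.range n \ H := by
        ext m; simp
      rw [this, Finset.card_sdiff_of_subset hHsub, Finset.card_range]
    have h2 : (B A).card = K1.card + 1 := by
      simp only [B, K1, Finset.card_filter]
      rw [Finset.sum_range_succ, Finset.sum_range, if_pos hHnotin]
    rw [← Finset.add_sum_erase _ _ (Finset.mem_univ A), h2] at h1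
    have h3 : K.card = K1.card + s := by simp [K, Finset.card_disjSum]
    omega
  have hμinj : Set.InjOn μ K := by
    rintro (b | e) _ (b' | e') _ h
    · exact congrArg Sum.inl (hdist' A A b b' b b' b.2.le b'.2.le h).2.2
    · have := (hdist' A A b s b e' b.2.le le_rfl h).2.1
      have := b.2
      omega
    · have := (hdist' A A s b' e b' le_rfl b'.2.le h).2.1
      have := b'.2
      omega
    · exact congrArg Sum.inr (hdist' A A s s e e' le_rfl le_rfl h).2.2
  have hlocP : ∀ a' ∈ Finset.univ.erase A, LocP (B a') (l a') := by
    intro a' _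
    by_cases hne : (B a').Nonempty
    · exact locP_of_det lam hs2 (s + 1) a' (B a')
        (hloc a' a'.2 (B a') (Finset.filter_subset _ _) hne)
    · intro g hg _
      rw [Finset.not_nonempty_iff_eq_empty] at hne
      funext i
      have := hg i
      rw [hne] at this
      simpa using Polynomial.degree_lt_iff_coeff_zero _ 0 |>.1 this |> fun h =>
        Polynomial.ext fun m => by simpa using h m (Nat.zero_le _)
  have hfin := mainInd K μ hμinj l B (Finset.univ.erase A) hlocP (by
    rintro (b | e) _ a' ha' b' hb' j h
    · exact Finset.ne_of_mem_erase ha' (hdist' A a' b b' b j b.2.le (hBle a' b' hb') h).1.symm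
    · exact Finset.ne_of_mem_erase ha' (hdist' A a' s b' e j le_rfl (hBle a' b' hb') h).1.symm)
    r hcard E DD hred
  intro i hi
  obtain ⟨x, rfl⟩ := exists_enc i hi
  have := hfin (Sum.inr (x A)) (by simp [K]) x
  simp only [E, Sum.elim_inr, Function.update_eq_self] at this
  exact sub_eq_zero.1 this
end
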